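/- arXiv:2210.07868 — 2 statements merged into one kernel-verified Lean document; each statement's English description precedes it below -/
import Mathlib

section
/- Let m ≥ 1 and let L₁,…,L_m ⊂ ℝ² be centrally symmetric convex polygons, each with 0 in its interior. For every c ∈ ℝ, the cubical-like CC-norm of the central element ((0,…,0), c) ∈ H_{2m+1}(ℝ) equals 2·√(|c| / Σᵢ vol(Lᵢ*)⁻¹), where Lᵢ* = {x ∈ ℝ² : ∀ y ∈ Lᵢ, ⟨x,y⟩ ≤ 1} is the polar dual of Lᵢ and vol is Lebesgue measure on ℝ². -/
/-!
The formula reduces to a sharp isoperimetric inequality in each normed plane `(ℝ², ‖·‖_L)`: a closed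
absolutely continuous curve of length `ℓ` has balayage area `A` with `4 |A| vol(L*) ≤ ℓ²`, and
equality holds for the boundary of `L*` rotated by a right angle.

*Isoperimetric inequality* (`isoperimetric`). This is the projection argument of E. Schmidt. The polar
body lies between the graphs of two functions `f ≥ g` over an interval `[-w, w]` (`exists_slices`).
Rescale the coordinate `Y` of the curve affinely, with ratio `r`, to a function `h` with range
`[-w, w]`, and put `k = f ∘ h` on one of the two arcs between a minimum and a maximum of `Y` and
`k = g ∘ h` on the other. The points `(h, k)` belong to `L*`, so the pairing `h X' + k Y'` is at most
the speed `‖(X', Y')‖_L`. Integrating, the first term gives `-A / r`; the second gives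
`± r vol(L*)` by change of variables, the sign depending on which arc carries `f`. Both choices of the
arc are allowed, so `|A| / r + r vol(L*) ≤ ℓ`, and the arithmetic-geometric mean inequality concludes.

*Optimal curve* (`exists_optimal`). Run along the boundary of `L*` at constant areal speed. Almost
everywhere the velocity is parallel to an edge, and the constancy of the swept area forces the rotated
velocity to be a fixed multiple of the vertex of `L` dual to this edge. Hence the rotated curve has
constant `L`-speed.

*Gluing*. A closed curve of cubical length `R` has planar projections of length at most `R`, so its
total area is at most `(R² / 4) Σᵢ vol(Lᵢ*)⁻¹` (`le_cubeLength`). Conversely the optimal curves of all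
the planes have the same constant speed, so running them simultaneously gives equality.
-/

open MeasureTheory

/-- An absolutely continuous curve `[0,1] → (ℝ²)^m`, encoded componentwise by a function
together with an (interval-integrable) derivative whose integral recovers the function. -/
structure ACCurveM (m : ℕ) where
  toFun : ℝ → Fin m → ℝ × ℝ
  deriv : ℝ → Fin m → ℝ × ℝ
  integrable : ∀ i, IntervalIntegrable (fun t => deriv t i) volume 0 1
  integral_eq : ∀ i, ∀ t ∈ Set.Icc (0:ℝ) 1,
    toFun t i = toFun 0 i + ∫ s in (0:ℝ)..t, deriv s i

/-- The balayage area of the `i`-th planar projection of the curve. -/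
noncomputable def ACCurveM.area {m : ℕ} (γ : ACCurveM m) (i : Fin m) : ℝ :=
  (1/2) * ∫ t in (0:ℝ)..1,
    ((γ.toFun t i).1 * (γ.deriv t i).2 - (γ.toFun t i).2 * (γ.deriv t i).1)

/-- The cubical-like length `∫₀¹ maxᵢ ‖γᵢ'(t)‖_{Lᵢ} dt`. -/
noncomputable def ACCurveM.cubeLength {m : ℕ} (L : Fin m → Set (ℝ × ℝ))
    (γ : ACCurveM m) : ℝ :=
  ∫ t in (0:ℝ)..1, ⨆ i, gauge (L i) (γ.deriv t i)

/-- The cubical-like CC-norm of `((v₁,…,v_m), c) ∈ H_{2m+1}(ℝ)`: the infimum of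
cubical-like lengths over absolutely continuous curves from `0` with endpoints `vᵢ`
and total balayage area `c`. -/
noncomputable def cubeCCNorm {m : ℕ} (L : Fin m → Set (ℝ × ℝ))
    (g : (Fin m → ℝ × ℝ) × ℝ) : ℝ :=
  sInf { r | ∃ γ : ACCurveM m, (∀ i, γ.toFun 0 i = 0) ∧ (∀ i, γ.toFun 1 i = g.1 i) ∧
    (∑ i, γ.area i) = g.2 ∧ γ.cubeLength L = r }

/-- The group law of `H_{2m+1}(ℝ)` on `(ℝ²)^m × ℝ`:
`((v₁,…,v_m),c)·((v₁',…,v_m'),c') = ((vᵢ+vᵢ')ᵢ, c+c'+(1/2)Σᵢ det(vᵢ,vᵢ'))`. -/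
noncomputable def heisMulM {m : ℕ} (g h : (Fin m → ℝ × ℝ) × ℝ) : (Fin m → ℝ × ℝ) × ℝ :=
  (fun i => g.1 i + h.1 i,
    g.2 + h.2 + (1/2) * ∑ i, ((g.1 i).1 * (h.1 i).2 - (g.1 i).2 * (h.1 i).1))

/-- The polar dual `L* = {x | ∀ y ∈ L, ⟨x,y⟩ ≤ 1}`. -/
def polarDual (L : Set (ℝ × ℝ)) : Set (ℝ × ℝ) :=
  { x | ∀ y ∈ L, x.1 * y.1 + x.2 * y.2 ≤ 1 }

open Set Filter Topology

/-! ### Polar bodies of polygons -/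

lemma mem_polarDual_convexHull {F : Finset (ℝ × ℝ)} {x : ℝ × ℝ} :
    x ∈ polarDual (convexHull ℝ (F : Set (ℝ × ℝ))) ↔
      ∀ p ∈ F, x.1 * p.1 + x.2 * p.2 ≤ 1 := by
  refine ⟨fun h p hp => h p (subset_convexHull ℝ _ (by simpa using hp)), fun h y hy => ?_⟩
  have hlin : IsLinearMap ℝ (fun y : ℝ × ℝ => x.1 * y.1 + x.2 * y.2) :=
    ⟨fun a b => by simp; ring, fun c a => by simp; ring⟩
  exact convexHull_min (t := {y : ℝ × ℝ | x.1 * y.1 + x.2 * y.2 ≤ 1}) (fun p hp => h p hp)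
    (convex_halfSpace_le hlin 1) hy

/-- Since `0` is interior, no nonzero linear functional is nonpositive on all the points of `F`. -/
lemma exists_dot_pos {F : Finset (ℝ × ℝ)}
    (h0 : (0 : ℝ × ℝ) ∈ interior (convexHull ℝ (F : Set (ℝ × ℝ)))) {x : ℝ × ℝ} (hx : x ≠ 0) :
    ∃ p ∈ F, 0 < x.1 * p.1 + x.2 * p.2 := by
  by_contra! hcon
  have hlin : IsLinearMap ℝ (fun y : ℝ × ℝ => x.1 * y.1 + x.2 * y.2) :=
    ⟨fun a b => by simp; ring, fun c a => by simp; ring⟩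
  have hsub : convexHull ℝ (F : Set (ℝ × ℝ)) ⊆ {y : ℝ × ℝ | x.1 * y.1 + x.2 * y.2 ≤ 0} :=
    convexHull_min (fun p hp => hcon p hp) (convex_halfSpace_le hlin 0)
  have hnhds : convexHull ℝ (F : Set (ℝ × ℝ)) ∈ 𝓝 (0 : ℝ × ℝ) := mem_interior_iff_mem_nhds.1 h0
  have ht : Tendsto (fun s : ℝ => s • x) (𝓝[>] 0) (𝓝 0) := by
    have : Tendsto (fun s : ℝ => s • x) (𝓝 0) (𝓝 ((0 : ℝ) • x)) := by
      apply Continuous.tendsto; fun_prop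
    rw [zero_smul] at this
    exact this.mono_left nhdsWithin_le_nhds
  obtain ⟨s, hs, hs0⟩ := ((ht.eventually hnhds).and self_mem_nhdsWithin).exists
  have h1 := hsub hs
  simp only [mem_ofPred_eq, Prod.smul_fst, Prod.smul_snd, smul_eq_mul] at h1
  have hs0 : 0 < s := hs0
  have hx2 : 0 < x.1 * x.1 + x.2 * x.2 := by
    by_contra! hle
    apply hx
    ext
    · simp only [Prod.fst_zero]; nlinarith [mul_self_nonneg x.1, mul_self_nonneg x.2]
    · simp only [Prod.snd_zero]; nlinarith [mul_self_nonneg x.1, mul_self_nonneg x.2]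
  nlinarith [mul_pos hs0 hx2]

lemma isClosed_polarDual (L : Set (ℝ × ℝ)) : IsClosed (polarDual L) := by
  have : polarDual L = ⋂ y ∈ L, {x : ℝ × ℝ | x.1 * y.1 + x.2 * y.2 ≤ 1} := by
    ext x; simp [polarDual]
  rw [this]
  exact isClosed_biInter fun y _ => isClosed_le (by fun_prop) (by fun_prop)

lemma isCompact_polarDual {L : Set (ℝ × ℝ)} (h0 : (0 : ℝ × ℝ) ∈ interior L) (hsym : L = -L) :
    IsCompact (polarDual L) := by
  obtain ⟨ε, hε, hb⟩ := Metric.mem_nhds_iff.1 (mem_interior_iff_mem_nhds.1 h0)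
  refine Metric.isCompact_of_isClosed_isBounded (isClosed_polarDual L)
    ((Metric.isBounded_iff_subset_closedBall 0).2 ⟨2 / ε, fun x hx => ?_⟩)
  have key : ∀ y ∈ L, |x.1 * y.1 + x.2 * y.2| ≤ 1 := by
    intro y hy
    refine abs_le.2 ⟨?_, hx y hy⟩
    have : -y ∈ L := by rw [hsym]; simpa using hy
    have := hx _ this
    simp only [Prod.fst_neg, Prod.snd_neg] at this
    linarith
  have e1 := key (ε / 2, 0) (hb (by simp [Prod.norm_def, abs_of_pos hε, hε]))
  have e2 := key (0, ε / 2) (hb (by simp [Prod.norm_def, abs_of_pos hε, hε]))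
  simp only [mul_zero, add_zero, zero_add, abs_mul, abs_of_pos (half_pos hε)] at e1 e2
  rw [mem_closedBall_zero_iff, Prod.norm_def]
  refine max_le ?_ ?_
  · rw [Real.norm_eq_abs, le_div_iff₀ hε]; linarith
  · rw [Real.norm_eq_abs, le_div_iff₀ hε]; linarith

/-- Two continuous graphs over an interval `[-w, w]` lie in the polar body (they are its lower and
upper boundary), and the area of the polar body is the integral of their difference. -/
lemma exists_slices {F : Finset (ℝ × ℝ)} {L : Set (ℝ × ℝ)}
    (hL : L = convexHull ℝ (F : Set (ℝ × ℝ))) (hsym : L = -L) (h0 : (0 : ℝ × ℝ) ∈ interior L) :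
    ∃ w : ℝ, 0 < w ∧ ∃ f g : ℝ → ℝ, Continuous f ∧ Continuous g ∧
      (∀ u ∈ Icc (-w) w, (u, f u) ∈ polarDual L ∧ (u, g u) ∈ polarDual L) ∧
      ∫ u in (-w)..w, (f u - g u) = (volume (polarDual L)).toReal := by
  have hP : ∀ x, x ∈ polarDual L ↔ ∀ p ∈ F, x.1 * p.1 + x.2 * p.2 ≤ 1 := by
    intro x; rw [hL]; exact mem_polarDual_convexHull
  have hneg : ∀ x ∈ polarDual L, -x ∈ polarDual L := by
    intro x hx y hy
    have : -y ∈ L := by rw [hsym]; simpa using hy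
    have := hx _ this
    simp only [Prod.fst_neg, Prod.snd_neg] at this ⊢
    linarith
  have hpos : ∀ x : ℝ × ℝ, x ≠ 0 → ∃ p ∈ F, 0 < x.1 * p.1 + x.2 * p.2 :=
    fun x hx => exists_dot_pos (hL ▸ h0) hx
  classical
  set U := F.filter (fun p => 0 < p.2) with hU
  set D := F.filter (fun p => p.2 < 0) with hD
  have hUne : U.Nonempty := by
    obtain ⟨p, hp, h⟩ := hpos (0, 1) (by simp)
    exact ⟨p, by simp [hU, hp]; simpa using h⟩
  have hDne : D.Nonempty := by
    obtain ⟨p, hp, h⟩ := hpos (0, -1) (by simp)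
    exact ⟨p, by simp [hD, hp]; simpa using h⟩
  let f : ℝ → ℝ := fun u => U.inf' hUne fun p => (1 - u * p.1) / p.2
  let g : ℝ → ℝ := fun u => D.sup' hDne fun p => (1 - u * p.1) / p.2
  have hfc : Continuous f := Continuous.finset_inf'_apply _ fun p _ => by fun_prop
  have hgc : Continuous g := Continuous.finset_sup'_apply _ fun p _ => by fun_prop
  have hle_f : ∀ u v, v ≤ f u ↔ ∀ p ∈ F, 0 < p.2 → u * p.1 + v * p.2 ≤ 1 := by
    intro u v
    simp only [f, Finset.le_inf'_iff, hU, Finset.mem_filter, and_imp]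
    refine forall₃_congr fun p _ h => ?_
    rw [le_div_iff₀ h]
    constructor <;> intro h <;> linarith
  have hge_g : ∀ u v, g u ≤ v ↔ ∀ p ∈ F, p.2 < 0 → u * p.1 + v * p.2 ≤ 1 := by
    intro u v
    simp only [g, Finset.sup'_le_iff, hD, Finset.mem_filter, and_imp]
    refine forall₃_congr fun p _ h => ?_
    rw [div_le_iff_of_neg h]
    constructor <;> intro h <;> linarith
  have hmem : ∀ u v, (u, v) ∈ polarDual L ↔
      (v ≤ f u ∧ g u ≤ v ∧ ∀ p ∈ F, p.2 = 0 → u * p.1 ≤ 1) := by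
    intro u v
    rw [hP, hle_f, hge_g]
    constructor
    · intro h
      exact ⟨fun p hp _ => h p hp, fun p hp _ => h p hp, fun p hp h2 => by
        have := h p hp; simp only [h2] at this; linarith⟩
    · rintro ⟨h1, h2, h3⟩ p hp
      rcases lt_trichotomy p.2 0 with h | h | h
      · exact h2 p hp h
      · have := h3 p hp h; simp only [h]; linarith
      · exact h1 p hp h
  have hcpt := isCompact_polarDual h0 hsym
  have h0P : (0 : ℝ × ℝ) ∈ polarDual L := by intro y _; simp
  obtain ⟨z, hz, hzmax⟩ := hcpt.exists_isMaxOn ⟨0, h0P⟩ (f := Prod.fst) (by fun_prop)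
  have hzmax' : ∀ x ∈ polarDual L, x.1 ≤ z.1 := fun x hx => hzmax hx
  have hzpos : 0 < z.1 := by
    set M := F.sum (fun p => |p.1|) with hM
    have hM0 : 0 ≤ M := Finset.sum_nonneg fun _ _ => abs_nonneg _
    have hx : ((1 / (M + 1), 0) : ℝ × ℝ) ∈ polarDual L := by
      rw [hP]
      intro p hp
      have : |p.1| ≤ M := Finset.single_le_sum (f := fun p : ℝ × ℝ => |p.1|)
        (fun _ _ => abs_nonneg _) hp
      have h1 := le_abs_self p.1
      simp only [zero_mul, add_zero]
      rw [div_mul_eq_mul_div, div_le_one (by positivity)]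
      linarith
    exact lt_of_lt_of_le (by positivity) (hzmax' _ hx)
  have hslice : ∀ u ∈ Icc (-z.1) z.1, (u, u / z.1 * z.2) ∈ polarDual L := by
    intro u hu
    rw [hP]
    intro p hp
    have h1 := (hP z).1 hz p hp
    have h2 := (hP _).1 (hneg z hz) p hp
    simp only [Prod.fst_neg, Prod.snd_neg] at h2
    have e : u * p.1 + u / z.1 * z.2 * p.2 = u / z.1 * (z.1 * p.1 + z.2 * p.2) := by
      field_simp
    simp only [e]
    calc _ ≤ |u / z.1 * (z.1 * p.1 + z.2 * p.2)| := le_abs_self _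
      _ = |u / z.1| * |z.1 * p.1 + z.2 * p.2| := abs_mul _ _
      _ ≤ 1 * 1 := by
        gcongr
        · rw [abs_div, abs_of_pos hzpos, div_le_one hzpos]; exact abs_le.2 hu
        · exact abs_le.2 ⟨by linarith, h1⟩
      _ = 1 := by norm_num
  have hgf : ∀ u ∈ Icc (-z.1) z.1, g u ≤ f u ∧ ∀ p ∈ F, p.2 = 0 → u * p.1 ≤ 1 := by
    intro u hu
    have := (hmem _ _).1 (hslice u hu)
    exact ⟨this.2.1.trans this.1, this.2.2⟩
  -- The lines `u = ±z.1` support the polar body, and every slice over `[-z.1, z.1]` meets the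
  -- segment `[-z, z]`.
  refine ⟨z.1, hzpos, f, g, hfc, hgc, fun u hu => ?_, ?_⟩
  · have h := hgf u hu
    exact ⟨(hmem _ _).2 ⟨le_rfl, h.1, h.2⟩, (hmem _ _).2 ⟨h.1, le_rfl, h.2⟩⟩
  have hle : -z.1 ≤ z.1 := by linarith
  have hsl : ∀ u, Prod.mk u ⁻¹' polarDual L = if u ∈ Icc (-z.1) z.1 then Icc (g u) (f u) else ∅ := by
    intro u
    split_ifs with hu
    · ext v
      simp only [mem_preimage, hmem, mem_Icc]
      have h := hgf u hu
      tauto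
    · ext v
      simp only [mem_preimage, mem_empty_iff_false, iff_false]
      intro hv
      apply hu
      refine ⟨?_, hzmax' _ hv⟩
      have := hzmax' _ (hneg _ hv)
      simp only [Prod.fst_neg] at this
      linarith
  have hvol : volume (polarDual L) = ∫⁻ u in Icc (-z.1) z.1, ENNReal.ofReal (f u - g u) := by
    rw [Measure.volume_eq_prod, Measure.prod_apply (isClosed_polarDual L).measurableSet,
      ← lintegral_indicator measurableSet_Icc]
    refine lintegral_congr fun u => ?_
    rw [hsl u, indicator]
    split_ifs
    · rw [Real.volume_Icc]
    · simp
  rw [hvol, intervalIntegral.integral_of_le hle, ← integral_Icc_eq_integral_Ioc,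
    integral_eq_lintegral_of_nonneg_ae]
  · refine (ae_restrict_iff' measurableSet_Icc).2 (ae_of_all _ fun u hu => ?_)
    simpa using (hgf u hu).1
  · exact (hfc.sub hgc).aestronglyMeasurable

/-! ### Absolutely continuous functions -/

/-- A Lipschitz function of an absolutely continuous function is absolutely continuous. -/
lemma LipschitzOnWith.comp_absolutelyContinuousOnInterval {f h : ℝ → ℝ} {a b : ℝ} {K : NNReal}
    {s : Set ℝ} (hf : LipschitzOnWith K f s) (hh : AbsolutelyContinuousOnInterval h a b)
    (hs : MapsTo h (uIcc a b) s) :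
    AbsolutelyContinuousOnInterval (fun t => f (h t)) a b := by
  rw [absolutelyContinuousOnInterval_iff] at hh ⊢
  intro ε hε
  obtain ⟨δ, hδ, H⟩ := hh (ε / (K + 1)) (by positivity)
  refine ⟨δ, hδ, fun E hE hlt => ?_⟩
  have h1 := H E hE hlt
  have hmem := hE.1
  calc ∑ i ∈ Finset.range E.1, dist (f (h (E.2 i).1)) (f (h (E.2 i).2))
      ≤ ∑ i ∈ Finset.range E.1, K * dist (h (E.2 i).1) (h (E.2 i).2) := by
        refine Finset.sum_le_sum fun i hi => ?_
        exact hf.dist_le_mul _ (hs (hmem i hi).1) _ (hs (hmem i hi).2)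
    _ = K * ∑ i ∈ Finset.range E.1, dist (h (E.2 i).1) (h (E.2 i).2) := by
        rw [Finset.mul_sum]
    _ ≤ K * (ε / (K + 1)) := by gcongr
    _ < ε := by
        rw [mul_div_assoc', div_lt_iff₀ (by positivity)]
        nlinarith

/-- Change of variables for an absolutely continuous, not necessarily monotone, inner function. -/
lemma AbsolutelyContinuousOnInterval.integral_comp_mul_deriv {f h : ℝ → ℝ} {a b : ℝ}
    (hf : Continuous f) (hh : AbsolutelyContinuousOnInterval h a b) :
    ∫ t in a..b, f (h t) * deriv h t = ∫ u in h a..h b, f u := by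
  have hΦ : ∀ u, HasDerivAt (fun u => ∫ v in (0:ℝ)..u, f v) (f u) u := fun u =>
    intervalIntegral.integral_hasDerivAt_right (hf.intervalIntegrable _ _)
      (hf.stronglyMeasurableAtFilter _ _) hf.continuousAt
  set Φ := fun u => ∫ v in (0:ℝ)..u, f v with hΦdef
  obtain ⟨R, hR⟩ :=
    (isCompact_uIcc.image_of_continuousOn hh.continuousOn).isBounded.subset_closedBall 0
  obtain ⟨C, hC⟩ := (isCompact_closedBall (0:ℝ) R).exists_bound_of_continuousOn hf.continuousOn
  have hlip : LipschitzOnWith C.toNNReal Φ (Metric.closedBall 0 R) := by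
    refine (convex_closedBall (0:ℝ) R).lipschitzOnWith_of_nnnorm_hasDerivWithin_le
      (fun u _ => (hΦ u).hasDerivWithinAt) fun u hu => ?_
    rw [← NNReal.coe_le_coe, coe_nnnorm]
    exact (hC u hu).trans (Real.le_coe_toNNReal C)
  have hac := hlip.comp_absolutelyContinuousOnInterval hh
    (fun t ht => hR (mem_image_of_mem _ ht))
  have h1 := hac.integral_deriv_eq_sub
  have h2 : Φ (h b) - Φ (h a) = ∫ u in h a..h b, f u :=
    intervalIntegral.integral_interval_sub_left (hf.intervalIntegrable _ _)
      (hf.intervalIntegrable _ _)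
  rw [← h2, ← h1]
  refine intervalIntegral.integral_congr_ae ?_
  filter_upwards [hh.ae_differentiableAt] with t ht hmem
  have hd := ht (uIoc_subset_uIcc hmem)
  exact ((hΦ (h t)).comp t hd.hasDerivAt).deriv.symm

/-- For a closed path `h` that attains `-w` and `w`, one of the two arcs joining these points carries
`f` and the other carries `g`; the contributions of the endpoint `h 0` cancel. -/
lemma exists_selection {f g h : ℝ → ℝ} {w : ℝ} (hf : Continuous f) (hg : Continuous g)
    (hh : AbsolutelyContinuousOnInterval h 0 1) (h01 : h 0 = h 1) {s t : ℝ}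
    (hs : s ∈ Icc (0:ℝ) 1) (ht : t ∈ Icc (0:ℝ) 1) (hsw : h s = -w) (htw : h t = w) :
    ∃ k : ℝ → ℝ, (∀ τ, k τ = f (h τ) ∨ k τ = g (h τ)) ∧
      IntervalIntegrable (fun τ => k τ * deriv h τ) volume 0 1 ∧
      ∫ τ in (0:ℝ)..1, k τ * deriv h τ = ∫ u in (-w)..w, (f u - g u) := by
  have main : ∀ (f g : ℝ → ℝ), Continuous f → Continuous g → ∀ s t : ℝ, 0 ≤ s → s ≤ t → t ≤ 1 →
      ∃ k : ℝ → ℝ, (∀ τ, k τ = f (h τ) ∨ k τ = g (h τ)) ∧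
      IntervalIntegrable (fun τ => k τ * deriv h τ) volume 0 1 ∧
      ∫ τ in (0:ℝ)..1, k τ * deriv h τ = ∫ u in (h s)..(h t), (f u - g u) := by
    intro f g hf hg s t h0s hst ht1
    have hac : ∀ a b, 0 ≤ a → a ≤ b → b ≤ 1 → AbsolutelyContinuousOnInterval h a b := by
      intro a b h0 hab h1
      refine hh.mono ?_
      rw [uIcc_of_le hab, uIcc_of_le zero_le_one]
      exact Icc_subset_Icc h0 h1
    have hint : ∀ F : ℝ → ℝ, Continuous F → ∀ a b, 0 ≤ a → a ≤ b → b ≤ 1 →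
        IntervalIntegrable (fun τ => F (h τ) * deriv h τ) volume a b := by
      intro F hF a b h0 hab h1
      exact (hac a b h0 hab h1).intervalIntegrable_deriv.continuousOn_mul
        (hF.comp_continuousOn (hac a b h0 hab h1).continuousOn)
    classical
    let k : ℝ → ℝ := fun τ => if τ ∈ Ioc s t then f (h τ) else g (h τ)
    have e1 : EqOn (fun τ => g (h τ) * deriv h τ) (fun τ => k τ * deriv h τ) (Ioc 0 s) := by
      intro τ hτ
      have : τ ∉ Ioc s t := fun h => absurd h.1 (not_lt.2 hτ.2)
      simp only [k, if_neg this]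
    have e2 : EqOn (fun τ => f (h τ) * deriv h τ) (fun τ => k τ * deriv h τ) (Ioc s t) := by
      intro τ hτ
      simp only [k, if_pos hτ]
    have e3 : EqOn (fun τ => g (h τ) * deriv h τ) (fun τ => k τ * deriv h τ) (Ioc t 1) := by
      intro τ hτ
      have : τ ∉ Ioc s t := fun h => absurd h.2 (not_le.2 hτ.1)
      simp only [k, if_neg this]
    have i1 : IntervalIntegrable (fun τ => k τ * deriv h τ) volume 0 s :=
      (hint g hg 0 s le_rfl h0s (hst.trans ht1)).congr (by rwa [uIoc_of_le h0s])
    have i2 : IntervalIntegrable (fun τ => k τ * deriv h τ) volume s t :=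
      (hint f hf s t h0s hst ht1).congr (by rwa [uIoc_of_le hst])
    have i3 : IntervalIntegrable (fun τ => k τ * deriv h τ) volume t 1 :=
      (hint g hg t 1 (h0s.trans hst) ht1 le_rfl).congr (by rwa [uIoc_of_le ht1])
    refine ⟨k, fun τ => ?_, (i1.trans i2).trans i3, ?_⟩
    · by_cases hτ : τ ∈ Ioc s t
      · left; simp only [k, if_pos hτ]
      · right; simp only [k, if_neg hτ]
    rw [← intervalIntegral.integral_add_adjacent_intervals (i1.trans i2) i3,
      ← intervalIntegral.integral_add_adjacent_intervals i1 i2]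
    have c1 : ∫ τ in (0:ℝ)..s, k τ * deriv h τ = ∫ u in h 0..h s, g u := by
      rw [← (hac 0 s le_rfl h0s (hst.trans ht1)).integral_comp_mul_deriv hg]
      exact (intervalIntegral.integral_congr_ae (ae_of_all _ (by rwa [uIoc_of_le h0s]))).symm
    have c2 : ∫ τ in s..t, k τ * deriv h τ = ∫ u in h s..h t, f u := by
      rw [← (hac s t h0s hst ht1).integral_comp_mul_deriv hf]
      exact (intervalIntegral.integral_congr_ae (ae_of_all _ (by rwa [uIoc_of_le hst]))).symm
    have c3 : ∫ τ in t..1, k τ * deriv h τ = ∫ u in h t..h 1, g u := by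
      rw [← (hac t 1 (h0s.trans hst) ht1 le_rfl).integral_comp_mul_deriv hg]
      exact (intervalIntegral.integral_congr_ae (ae_of_all _ (by rwa [uIoc_of_le ht1]))).symm
    rw [c1, c2, c3, intervalIntegral.integral_sub (hf.intervalIntegrable _ _)
      (hg.intervalIntegrable _ _)]
    have j1 := intervalIntegral.integral_add_adjacent_intervals
      (hg.intervalIntegrable (μ := volume) (h 0) (h s)) (hg.intervalIntegrable (h s) (h t))
    have j2 := intervalIntegral.integral_add_adjacent_intervals
      (hg.intervalIntegrable (μ := volume) (h 0) (h t)) (hg.intervalIntegrable (h t) (h 1))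
    rw [h01, intervalIntegral.integral_same] at j2
    rw [h01] at j1 ⊢
    linarith
  rcases le_total s t with hst | hts
  · obtain ⟨k, h1, h2, h3⟩ := main f g hf hg s t hs.1 hst ht.2
    exact ⟨k, h1, h2, by rw [h3, hsw, htw]⟩
  · obtain ⟨k, h1, h2, h3⟩ := main g f hg hf t s ht.1 hts hs.2
    refine ⟨k, fun τ => (h1 τ).symm, h2, ?_⟩
    rw [h3, hsw, htw, intervalIntegral.integral_symm, ← intervalIntegral.integral_neg]
    exact intervalIntegral.integral_congr fun u _ => by simp

/-- Points of the polar body are linear functionals of norm at most `1` for the gauge of `L`. -/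
lemma abs_dot_le_gauge {L : Set (ℝ × ℝ)} (hsym : L = -L) (h0 : (0 : ℝ × ℝ) ∈ interior L)
    {x : ℝ × ℝ} (hx : x ∈ polarDual L) (v : ℝ × ℝ) :
    |x.1 * v.1 + x.2 * v.2| ≤ gauge L v := by
  have key : ∀ v : ℝ × ℝ, x.1 * v.1 + x.2 * v.2 ≤ gauge L v := by
    intro v
    have habs : Absorbent ℝ L := absorbent_nhds_zero (mem_interior_iff_mem_nhds.1 h0)
    refine le_csInf habs.gauge_set_nonempty ?_
    rintro r ⟨hr, y, hy, rfl⟩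
    have := hx y hy
    have hr : 0 < r := hr
    simp only [Prod.smul_fst, Prod.smul_snd, smul_eq_mul]
    nlinarith
  refine abs_le'.2 ⟨key v, ?_⟩
  have h1 := key (-v)
  have h2 : gauge L (-v) = gauge L v :=
    gauge_neg (fun y hy => by rw [hsym]; simpa using hy) v
  simp only [Prod.fst_neg, Prod.snd_neg] at h1
  linarith

lemma intervalIntegrable_gauge {L : Set (ℝ × ℝ)} (hconv : Convex ℝ L)
    (h0 : (0 : ℝ × ℝ) ∈ interior L) {d : ℝ → ℝ × ℝ} (hd : IntervalIntegrable d volume 0 1) :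
    IntervalIntegrable (fun t => gauge L (d t)) volume 0 1 := by
  have hn := mem_interior_iff_mem_nhds.1 h0
  obtain ⟨ε, hε, hb⟩ := Metric.mem_nhds_iff.1 hn
  refine (hd.norm.const_mul ε⁻¹).mono_fun
    ((continuous_gauge hconv hn).comp_aestronglyMeasurable hd.def'.aestronglyMeasurable)
    (ae_of_all _ fun t => ?_)
  have h1 : gauge L (d t) ≤ ‖d t‖ / ε := by
    have h2 := gauge_mono (absorbent_ball_zero hε) hb (d t)
    rwa [gauge_ball hε.le] at h2
  have h2 : 0 ≤ ε⁻¹ * ‖d t‖ := by positivity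
  simp only [Real.norm_of_nonneg (gauge_nonneg _), Real.norm_of_nonneg h2]
  rwa [div_eq_inv_mul] at h1

/-! ### The isoperimetric inequality in a normed plane -/

/-- The isoperimetric inequality in the normed plane with unit ball `L`, for closed absolutely
continuous curves that need not be simple. -/
lemma isoperimetric {F : Finset (ℝ × ℝ)} {L : Set (ℝ × ℝ)}
    (hL : L = convexHull ℝ (F : Set (ℝ × ℝ))) (hsym : L = -L) (h0 : (0 : ℝ × ℝ) ∈ interior L)
    {X Y : ℝ → ℝ} (hX : AbsolutelyContinuousOnInterval X 0 1)
    (hY : AbsolutelyContinuousOnInterval Y 0 1) (hX01 : X 0 = X 1) (hY01 : Y 0 = Y 1) :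
    4 * |(1/2) * ∫ t in (0:ℝ)..1, (X t * deriv Y t - Y t * deriv X t)| *
      (volume (polarDual L)).toReal ≤
      (∫ t in (0:ℝ)..1, gauge L (deriv X t, deriv Y t)) ^ 2 := by
  obtain ⟨w, hw, f, g, hf, hg, hfg, hvol⟩ := exists_slices hL hsym h0
  set V := (volume (polarDual L)).toReal with hV
  have hV0 : 0 ≤ V := ENNReal.toReal_nonneg
  have hX' := hX.intervalIntegrable_deriv
  have hY' := hY.intervalIntegrable_deriv
  have iXY' : IntervalIntegrable (fun t => X t * deriv Y t) volume 0 1 :=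
    hY'.continuousOn_mul hX.continuousOn
  have iYX' : IntervalIntegrable (fun t => Y t * deriv X t) volume 0 1 :=
    hX'.continuousOn_mul hY.continuousOn
  have hA : (1/2) * ∫ t in (0:ℝ)..1, (X t * deriv Y t - Y t * deriv X t) =
      - ∫ t in (0:ℝ)..1, Y t * deriv X t := by
    have := hX.integral_mul_deriv_eq_deriv_mul hY
    rw [intervalIntegral.integral_sub iXY' iYX', this, hX01, hY01]
    simp only [mul_comm (deriv X _)]
    ring
  have hX'0 : ∫ t in (0:ℝ)..1, deriv X t = 0 := by
    rw [hX.integral_deriv_eq_sub, hX01, sub_self]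
  rw [hA, abs_neg]
  set A := ∫ t in (0:ℝ)..1, Y t * deriv X t with hAdef
  have hYc : ContinuousOn Y (Icc 0 1) := by simpa using hY.continuousOn
  have hne : (Icc (0:ℝ) 1).Nonempty := ⟨0, by simp⟩
  obtain ⟨s, hs, hsmin⟩ := isCompact_Icc.exists_isMinOn hne hYc
  obtain ⟨t, ht, htmax⟩ := isCompact_Icc.exists_isMaxOn hne hYc
  have hmin : ∀ τ ∈ Icc (0:ℝ) 1, Y s ≤ Y τ := fun τ hτ => hsmin hτ
  have hmax : ∀ τ ∈ Icc (0:ℝ) 1, Y τ ≤ Y t := fun τ hτ => htmax hτ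
  rcases (hmin t ht).eq_or_lt with heq | hlt
  · have hA0 : A = 0 := by
      have : A = ∫ τ in (0:ℝ)..1, Y s * deriv X τ := by
        refine intervalIntegral.integral_congr fun τ hτ => ?_
        rw [uIcc_of_le zero_le_one] at hτ
        have : Y τ = Y s := le_antisymm ((hmax τ hτ).trans heq.ge) (hmin τ hτ)
        simp only [this]
      rw [this, intervalIntegral.integral_const_mul, hX'0, mul_zero]
    rw [hA0]
    simp only [abs_zero, mul_zero, zero_mul]
    positivity
  -- `h` is `Y` rescaled affinely so that its range is the projection `[-w, w]` of the polar body.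
  set r := (Y t - Y s) / (2 * w) with hr
  have hr0 : 0 < r := div_pos (sub_pos.2 hlt) (by positivity)
  set mid := (Y t + Y s) / 2 with hmid
  have hrw : r * w = (Y t - Y s) / 2 := by rw [hr]; field_simp
  let h : ℝ → ℝ := fun τ => r⁻¹ * (Y τ - mid)
  have hh : AbsolutelyContinuousOnInterval h 0 1 := by
    refine AbsolutelyContinuousOnInterval.const_mul r⁻¹ (hY.sub (g := fun _ => mid) ?_)
    exact (LipschitzWith.const' (K := 0) mid).lipschitzOnWith.absolutelyContinuousOnInterval
  have hYh : ∀ τ, Y τ = r * h τ + mid := by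
    intro τ; simp only [h]; field_simp; ring
  have hdh : ∀ τ, deriv Y τ = r * deriv h τ := by
    intro τ
    have : Y = fun τ => r * h τ + mid := funext hYh
    conv_lhs => rw [this]
    rw [deriv_add_const, deriv_const_mul_field]
  have hrange : ∀ τ ∈ Icc (0:ℝ) 1, h τ ∈ Icc (-w) w := by
    intro τ hτ
    have h1 := hmin τ hτ
    have h2 := hmax τ hτ
    rw [hYh τ] at h1 h2
    constructor
    · by_contra! hc
      have := mul_lt_mul_of_pos_left hc hr0
      linarith
    · by_contra! hc
      have := mul_lt_mul_of_pos_left hc hr0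
      linarith
  have hhs : h s = -w := by
    have : r * (h s + w) = 0 := by have := hYh s; linarith
    rcases mul_eq_zero.1 this with h | h <;> linarith
  have hht : h t = w := by
    have : r * (h t - w) = 0 := by have := hYh t; linarith
    rcases mul_eq_zero.1 this with h | h <;> linarith
  have hh01 : h 0 = h 1 := by simp only [h, hY01]
  set ℓ := ∫ t in (0:ℝ)..1, gauge L (deriv X t, deriv Y t) with hℓ
  have hd : IntervalIntegrable (fun t => (deriv X t, deriv Y t)) volume 0 1 :=
    ⟨hX'.1.prodMk hY'.1, hX'.2.prodMk hY'.2⟩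
  have hgi := intervalIntegrable_gauge (hL ▸ convex_convexHull ℝ _) h0 hd
  have ihX : IntervalIntegrable (fun τ => h τ * deriv X τ) volume 0 1 :=
    hX'.continuousOn_mul hh.continuousOn
  have hhX : ∫ τ in (0:ℝ)..1, h τ * deriv X τ = r⁻¹ * A := by
    have e : ∀ τ, h τ * deriv X τ = r⁻¹ * (Y τ * deriv X τ) - r⁻¹ * mid * deriv X τ := by
      intro τ; simp only [h]; ring
    simp_rw [e]
    rw [intervalIntegral.integral_sub (iYX'.const_mul _) (hX'.const_mul _),
      intervalIntegral.integral_const_mul, intervalIntegral.integral_const_mul, hX'0]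
    ring
  -- For either assignment of the two boundary graphs to the two arcs, the pairing of the
  -- resulting path in the polar body with the velocity is bounded by the length.
  have bound : ∀ f g : ℝ → ℝ, Continuous f → Continuous g →
      (∀ u ∈ Icc (-w) w, (u, f u) ∈ polarDual L ∧ (u, g u) ∈ polarDual L) →
      |r⁻¹ * A + r * ∫ u in (-w)..w, (f u - g u)| ≤ ℓ := by
    intro f g hf hg hfg
    obtain ⟨k, hk, hki, hkint⟩ := exists_selection hf hg hh hh01 hs ht hhs hht
    rw [← hkint, ← hhX, ← intervalIntegral.integral_const_mul,
      ← intervalIntegral.integral_add ihX (hki.const_mul r)]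
    refine (intervalIntegral.abs_integral_le_integral_abs zero_le_one).trans ?_
    refine intervalIntegral.integral_mono_on zero_le_one (ihX.add (hki.const_mul r)).abs hgi ?_
    intro τ hτ
    have hmem : (h τ, k τ) ∈ polarDual L := by
      rcases hk τ with e | e <;> rw [e]
      · exact (hfg _ (hrange τ hτ)).1
      · exact (hfg _ (hrange τ hτ)).2
    have := abs_dot_le_gauge hsym h0 hmem (deriv X τ, deriv Y τ)
    refine le_of_eq_of_le ?_ this
    simp only [hdh]
    ring_nf
  have b1 := bound f g hf hg hfg
  have b2 := bound g f hg hf fun u hu => (hfg u hu).symm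
  have hgf : ∫ u in (-w)..w, (g u - f u) = -V := by
    rw [← hvol, ← intervalIntegral.integral_neg]
    exact intervalIntegral.integral_congr fun u _ => by simp
  rw [hvol] at b1
  rw [hgf] at b2
  have b3 : r⁻¹ * |A| + r * V ≤ ℓ := by
    rcases abs_cases A with ⟨h, _⟩ | ⟨h, _⟩ <;> rw [h]
    · exact (le_abs_self _).trans b1
    · have := (neg_le_abs _).trans b2
      linarith
  -- The inequality of arithmetic and geometric means removes the scale `r`.
  have hl : (r⁻¹ * |A| + r * V) ^ 2 ≤ ℓ ^ 2 := by
    have : 0 ≤ r⁻¹ * |A| + r * V := by positivity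
    gcongr
  have h4 : 4 * |A| * V = 4 * (r⁻¹ * |A|) * (r * V) := by field_simp
  nlinarith [sq_nonneg (r⁻¹ * |A| - r * V)]

/-! ### The optimal curve in a normed plane -/

/-- The support function of the finite set `F` in the direction of angle `φ`; its reciprocal is the
radial function of the polar of `F`. -/
noncomputable def supportAngle (F : Finset (ℝ × ℝ)) (hF : F.Nonempty) (φ : ℝ) : ℝ :=
  F.sup' hF fun p => Real.cos φ * p.1 + Real.sin φ * p.2

section supportAngle

variable {F : Finset (ℝ × ℝ)} (hF : F.Nonempty)

lemma continuous_supportAngle : Continuous (supportAngle F hF) :=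
  Continuous.finset_sup'_apply _ fun p _ => by fun_prop

lemma le_supportAngle {p : ℝ × ℝ} (hp : p ∈ F) (φ : ℝ) :
    Real.cos φ * p.1 + Real.sin φ * p.2 ≤ supportAngle F hF φ :=
  Finset.le_sup' (fun p : ℝ × ℝ => Real.cos φ * p.1 + Real.sin φ * p.2) hp

lemma exists_eq_supportAngle (φ : ℝ) :
    ∃ p ∈ F, supportAngle F hF φ = Real.cos φ * p.1 + Real.sin φ * p.2 :=
  Finset.exists_mem_eq_sup' hF _

lemma supportAngle_pos (h0 : (0 : ℝ × ℝ) ∈ interior (convexHull ℝ (F : Set (ℝ × ℝ)))) (φ : ℝ) :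
    0 < supportAngle F hF φ := by
  obtain ⟨p, hp, h⟩ := exists_dot_pos h0 (x := (Real.cos φ, Real.sin φ)) (by
    intro h
    have h1 : Real.cos φ = 0 := congrArg Prod.fst h
    have h2 : Real.sin φ = 0 := congrArg Prod.snd h
    have := Real.cos_sq_add_sin_sq φ
    rw [h1, h2] at this
    norm_num at this)
  exact h.trans_le (le_supportAngle hF hp φ)

lemma exists_supportAngle_bounds : ∃ M : ℝ, 0 < M ∧ (∀ φ, supportAngle F hF φ ≤ M) ∧
    ∀ a b, |supportAngle F hF a - supportAngle F hF b| ≤ M * |a - b| := by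
  set M := ∑ p ∈ F, (|p.1| + |p.2|) with hM
  have hM0 : 0 ≤ M := Finset.sum_nonneg fun _ _ => by positivity
  have hpM : ∀ p ∈ F, |p.1| + |p.2| ≤ M := fun p hp =>
    Finset.single_le_sum (f := fun p : ℝ × ℝ => |p.1| + |p.2|) (fun _ _ => by positivity) hp
  refine ⟨M + 1, by positivity, fun φ => ?_, ?_⟩
  · obtain ⟨p, hp, h⟩ := exists_eq_supportAngle hF φ
    rw [h]
    have h1 : Real.cos φ * p.1 ≤ 1 * |p.1| := (le_abs_self _).trans (by
      rw [abs_mul]; gcongr; exact Real.abs_cos_le_one φ)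
    have h2 : Real.sin φ * p.2 ≤ 1 * |p.2| := (le_abs_self _).trans (by
      rw [abs_mul]; gcongr; exact Real.abs_sin_le_one φ)
    linarith [hpM p hp]
  · have key : ∀ a b, supportAngle F hF a - supportAngle F hF b ≤ (M + 1) * |a - b| := by
      intro a b
      obtain ⟨p, hp, h⟩ := exists_eq_supportAngle hF a
      have hb := le_supportAngle hF hp b
      have hc : |Real.cos a - Real.cos b| ≤ |a - b| := by
        simpa [Real.dist_eq] using Real.lipschitzWith_cos.dist_le_mul a b
      have hs : |Real.sin a - Real.sin b| ≤ |a - b| := by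
        simpa [Real.dist_eq] using Real.lipschitzWith_sin.dist_le_mul a b
      have h1 : (Real.cos a - Real.cos b) * p.1 ≤ |a - b| * |p.1| := (le_abs_self _).trans (by
        rw [abs_mul]; gcongr)
      have h2 : (Real.sin a - Real.sin b) * p.2 ≤ |a - b| * |p.2| := (le_abs_self _).trans (by
        rw [abs_mul]; gcongr)
      have h3 := mul_le_mul_of_nonneg_left (hpM p hp) (abs_nonneg (a - b))
      rw [h]
      nlinarith [abs_nonneg (a - b)]
    intro a b
    refine abs_le'.2 ⟨key a b, ?_⟩
    have := key b a
    rw [abs_sub_comm] at this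
    linarith

/-- Twice the area of the polar body in polar coordinates. -/
lemma volume_polarDual_eq (h0 : (0 : ℝ × ℝ) ∈ interior (convexHull ℝ (F : Set (ℝ × ℝ)))) :
    2 * (volume (polarDual (convexHull ℝ (F : Set (ℝ × ℝ))))).toReal =
      ∫ φ in (-Real.pi)..Real.pi, ((supportAngle F hF φ)⁻¹) ^ 2 := by
  set P := polarDual (convexHull ℝ (F : Set (ℝ × ℝ))) with hP
  have hPm : MeasurableSet P := (isClosed_polarDual _).measurableSet
  have hNpos := supportAngle_pos hF h0
  have hNc := continuous_supportAngle hF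
  have hmem : ∀ ρ φ : ℝ, 0 < ρ →
      ((ρ * Real.cos φ, ρ * Real.sin φ) ∈ P ↔ ρ ≤ (supportAngle F hF φ)⁻¹) := by
    intro ρ φ hρ
    rw [hP, mem_polarDual_convexHull, le_inv_comm₀ hρ (hNpos φ), supportAngle, Finset.sup'_le_iff]
    refine forall₂_congr fun p _ => ?_
    rw [inv_eq_one_div, le_div_iff₀ hρ]
    constructor <;> intro h <;> linarith
  have h1 : volume P = ∫⁻ φ in Ioo (-Real.pi) Real.pi,
      ENNReal.ofReal (((supportAngle F hF φ)⁻¹) ^ 2 / 2) := by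
    rw [← lintegral_indicator_one hPm, ← lintegral_comp_polarCoord_symm, polarCoord_target,
      Measure.volume_eq_prod, ← Measure.prod_restrict, lintegral_prod_symm]
    · refine lintegral_congr fun φ => ?_
      have e : ∀ ρ ∈ Ioi (0:ℝ), ENNReal.ofReal ρ • P.indicator 1 (polarCoord.symm (ρ, φ)) =
          (Ioc 0 (supportAngle F hF φ)⁻¹).indicator (fun ρ => ENNReal.ofReal ρ) ρ := by
        intro ρ hρ
        have hρ : 0 < ρ := hρ
        simp only [polarCoord_symm_apply, indicator, hmem ρ φ hρ, mem_Ioc, hρ, true_and]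
        split_ifs <;> simp
      rw [setLIntegral_congr_fun measurableSet_Ioi e, setLIntegral_indicator measurableSet_Ioc]
      have hinter : Ioc 0 (supportAngle F hF φ)⁻¹ ∩ Ioi 0 = Ioc 0 (supportAngle F hF φ)⁻¹ :=
        inter_eq_left.2 fun x hx => hx.1
      rw [hinter, ← ofReal_integral_eq_lintegral_ofReal, ← intervalIntegral.integral_of_le
        (inv_nonneg.2 (hNpos φ).le), integral_id]
      · simp
      · exact continuous_id.integrableOn_Ioc
      · exact (ae_restrict_iff' measurableSet_Ioc).2 (ae_of_all _ fun x hx => hx.1.le)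
    · refine Measurable.aemeasurable ?_
      refine (ENNReal.measurable_ofReal.comp measurable_fst).smul ?_
      refine (measurable_one.indicator hPm).comp ?_
      exact continuous_polarCoord_symm.measurable
  have hle : -Real.pi ≤ Real.pi := by linarith [Real.pi_pos]
  have hcont : Continuous fun φ => ((supportAngle F hF φ)⁻¹) ^ 2 / 2 :=
    ((hNc.inv₀ fun φ => (hNpos φ).ne').pow 2).div_const 2
  rw [h1, ← ofReal_integral_eq_lintegral_ofReal, ← integral_Ioc_eq_integral_Ioo,
    ← intervalIntegral.integral_of_le hle, ENNReal.toReal_ofReal, intervalIntegral.integral_div]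
  · ring
  · exact intervalIntegral.integral_nonneg hle fun φ _ => by positivity
  · exact hcont.integrableOn_Icc.mono_set Ioo_subset_Icc_self
  · exact ae_of_all _ fun φ => by positivity

/-- The angle as a function of time when twice the swept area `∫ N⁻²`, for `N` the support function,
varies linearly: `Φ` runs once around the circle, counterclockwise if `β = T` and clockwise if
`β = -T`. -/
lemma exists_angle (h0 : (0 : ℝ × ℝ) ∈ interior (convexHull ℝ (F : Set (ℝ × ℝ)))) {T α β : ℝ}
    (hT : T = ∫ φ in (-Real.pi)..Real.pi, ((supportAngle F hF φ)⁻¹) ^ 2)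
    (hαβ : (α = 0 ∧ β = T) ∨ (α = T ∧ β = -T)) :
    0 < T ∧ ∃ Φ : ℝ → ℝ, (∀ t, HasDerivAt Φ (β * (supportAngle F hF (Φ t)) ^ 2) t) ∧
      MapsTo Φ (Icc 0 1) (Icc (-Real.pi) Real.pi) ∧
      Real.cos (Φ 0) = Real.cos (Φ 1) ∧ Real.sin (Φ 0) = Real.sin (Φ 1) := by
  have hNpos := supportAngle_pos hF h0
  have hNc := continuous_supportAngle hF
  obtain ⟨M, hM, hNM, -⟩ := exists_supportAngle_bounds hF
  have hrc : Continuous fun φ => ((supportAngle F hF φ)⁻¹) ^ 2 :=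
    (hNc.inv₀ fun φ => (hNpos φ).ne').pow 2
  set θ : ℝ → ℝ := fun u => ∫ φ in (-Real.pi)..u, ((supportAngle F hF φ)⁻¹) ^ 2 with hθ
  have hθd : ∀ u, HasDerivAt θ (((supportAngle F hF u)⁻¹) ^ 2) u := fun u =>
    intervalIntegral.integral_hasDerivAt_right (hrc.intervalIntegrable _ _)
      (hrc.stronglyMeasurableAtFilter _ _) hrc.continuousAt
  have hmono : StrictMono θ := strictMono_of_hasDerivAt_pos hθd fun u =>
    pow_pos (inv_pos.2 (hNpos u)) 2
  have hθc : Continuous θ := continuous_iff_continuousAt.2 fun u => (hθd u).continuousAt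
  -- `θ` has derivative at least `M⁻²`, hence is unbounded in both directions.
  have hlin : Monotone fun u => θ u - (M⁻¹) ^ 2 * u := by
    refine monotone_of_hasDerivAt_nonneg
      (fun u => (hθd u).sub ((hasDerivAt_id u).const_mul ((M⁻¹) ^ 2))) fun u => ?_
    have : M⁻¹ ≤ (supportAngle F hF u)⁻¹ := inv_anti₀ (hNpos u) (hNM u)
    have h2 : (M⁻¹) ^ 2 ≤ ((supportAngle F hF u)⁻¹) ^ 2 := by gcongr
    simpa using h2
  have hM2 : 0 < (M⁻¹) ^ 2 := by positivity
  have htop : Tendsto θ atTop atTop := by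
    refine tendsto_atTop_mono' _ (f₁ := fun u => (M⁻¹) ^ 2 * u + (θ 0 - (M⁻¹) ^ 2 * 0)) ?_
      (tendsto_atTop_add_const_right _ _ (tendsto_id.const_mul_atTop hM2))
    filter_upwards [eventually_ge_atTop 0] with u hu
    have := hlin hu
    simp only at this
    linarith
  have hbot : Tendsto θ atBot atBot := by
    refine tendsto_atBot_mono' _ (f₁ := fun u => (M⁻¹) ^ 2 * u + (θ 0 - (M⁻¹) ^ 2 * 0)) ?_
      (tendsto_atBot_add_const_right _ _ (tendsto_id.const_mul_atBot hM2))
    filter_upwards [eventually_le_atBot 0] with u hu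
    have := hlin hu
    simp only at this
    linarith
  have hsurj : Function.Surjective θ := hθc.surjective htop hbot
  set e := hmono.orderIsoOfSurjective θ hsurj with he
  have heθ : ∀ s, θ (e.symm s) = s := fun s => e.apply_symm_apply s
  have hθe : ∀ u, e.symm (θ u) = u := fun u => e.symm_apply_apply u
  have hT' : θ Real.pi = T := hT.symm
  have h0' : θ (-Real.pi) = 0 := by simp [hθ]
  have hTpos : 0 < T := by
    rw [← h0', ← hT']; exact hmono (by linarith [Real.pi_pos])
  have hd : ∀ s, HasDerivAt e.symm (supportAngle F hF (e.symm s) ^ 2) s := by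
    intro s
    have := HasDerivAt.of_local_left_inverse (f := θ) (g := e.symm) (a := s)
      e.symm.continuous.continuousAt (hθd _) (pow_pos (inv_pos.2 (hNpos _)) 2).ne'
      (Eventually.of_forall heθ)
    simpa using this
  have hs0 : e.symm 0 = -Real.pi := by rw [← h0', hθe]
  have hsT : e.symm T = Real.pi := by rw [← hT', hθe]
  refine ⟨hTpos, fun t => e.symm (α + β * t), fun t => ?_, fun t ht => ?_, ?_, ?_⟩
  · have h1 : HasDerivAt (fun t : ℝ => α + β * t) β t := by
      simpa using ((hasDerivAt_id t).const_mul β).const_add α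
    have := (hd (α + β * t)).comp t h1
    rwa [mul_comm] at this
  · have h01 : 0 ≤ α + β * t ∧ α + β * t ≤ T := by
      rcases hαβ with ⟨rfl, rfl⟩ | ⟨rfl, rfl⟩ <;> constructor <;> nlinarith [ht.1, ht.2]
    exact ⟨hs0 ▸ e.symm.monotone h01.1, hsT ▸ e.symm.monotone h01.2⟩
  all_goals
    rcases hαβ with ⟨rfl, rfl⟩ | ⟨rfl, rfl⟩ <;> simp [hs0, hsT]

end supportAngle

/-- The optimal curve, of length at most `1`: the boundary of the polar body, rotated by a right
angle, scaled and translated so as to start at `0`, with orientation `ε`. At almost every time its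
velocity is, up to sign, a vertex of `L` at which the functional given by the current position on the
boundary of the polar body is maximal. -/
lemma exists_optimal {F : Finset (ℝ × ℝ)} {L : Set (ℝ × ℝ)}
    (hL : L = convexHull ℝ (F : Set (ℝ × ℝ))) (hsym : L = -L) (h0 : (0 : ℝ × ℝ) ∈ interior L)
    {ε : ℝ} (hε : ε = 1 ∨ ε = -1) :
    ∃ X Y : ℝ → ℝ, AbsolutelyContinuousOnInterval X 0 1 ∧ AbsolutelyContinuousOnInterval Y 0 1 ∧
      X 0 = 0 ∧ X 1 = 0 ∧ Y 0 = 0 ∧ Y 1 = 0 ∧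
      (∀ᵐ t, t ∈ Icc (0:ℝ) 1 → gauge L (deriv X t, deriv Y t) ≤ 1) ∧
      (1/2) * ∫ t in (0:ℝ)..1, (X t * deriv Y t - Y t * deriv X t) =
        ε / (4 * (volume (polarDual L)).toReal) ∧ 0 < (volume (polarDual L)).toReal := by
  have h0' := hL ▸ h0
  obtain ⟨p₀, hp₀, -⟩ := exists_dot_pos h0' (x := (1, 0)) (by simp)
  have hF : F.Nonempty := ⟨p₀, hp₀⟩
  have hNpos := supportAngle_pos hF h0'
  have hNc := continuous_supportAngle hF
  set V := (volume (polarDual L)).toReal with hV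
  have hT : 2 * V = ∫ φ in (-Real.pi)..Real.pi, ((supportAngle F hF φ)⁻¹) ^ 2 := by
    rw [hV, hL]; exact volume_polarDual_eq hF h0'
  obtain ⟨α, β, hαβ, hβ⟩ : ∃ α β : ℝ, ((α = 0 ∧ β = 2 * V) ∨ (α = 2 * V ∧ β = -(2 * V))) ∧
      β = ε * (2 * V) := by
    rcases hε with rfl | rfl
    · exact ⟨0, 2 * V, Or.inl ⟨rfl, rfl⟩, by ring⟩
    · exact ⟨2 * V, -(2 * V), Or.inr ⟨rfl, rfl⟩, by ring⟩
  obtain ⟨hTpos, Φ, hΦd, hΦm, hcos, hsin⟩ := exists_angle hF h0' hT hαβ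
  have hVpos : 0 < V := by linarith
  obtain ⟨M, hM, hNM, hNlip⟩ := exists_supportAngle_bounds hF
  have huIcc : uIcc (0:ℝ) 1 = Icc 0 1 := uIcc_of_le zero_le_one
  -- absolute continuity of the ingredients
  have hΦac : AbsolutelyContinuousOnInterval Φ 0 1 := by
    have : LipschitzWith (Real.toNNReal (|β| * M ^ 2)) Φ := by
      refine lipschitzWith_of_nnnorm_deriv_le (fun t => (hΦd t).differentiableAt) fun t => ?_
      rw [← NNReal.coe_le_coe, coe_nnnorm, (hΦd t).deriv, norm_mul, Real.norm_eq_abs]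
      refine le_trans ?_ (Real.le_coe_toNNReal _)
      rw [Real.norm_of_nonneg (by positivity)]
      have := (hNpos (Φ t)).le
      gcongr
      exact hNM _
    exact this.lipschitzOnWith.absolutelyContinuousOnInterval
  have hcosac : AbsolutelyContinuousOnInterval (fun t => Real.cos (Φ t)) 0 1 :=
    (Real.lipschitzWith_cos.lipschitzOnWith (s := univ)).comp_absolutelyContinuousOnInterval hΦac
      (mapsTo_univ _ _)
  have hsinac : AbsolutelyContinuousOnInterval (fun t => Real.sin (Φ t)) 0 1 :=
    (Real.lipschitzWith_sin.lipschitzOnWith (s := univ)).comp_absolutelyContinuousOnInterval hΦac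
      (mapsTo_univ _ _)
  have hRac : AbsolutelyContinuousOnInterval (fun t => (supportAngle F hF (Φ t))⁻¹) 0 1 := by
    obtain ⟨z, -, hz⟩ := (isCompact_Icc (a := -Real.pi) (b := Real.pi)).exists_isMinOn
      ⟨0, by constructor <;> linarith [Real.pi_pos]⟩ hNc.continuousOn
    have hz' : ∀ u ∈ Icc (-Real.pi) Real.pi, supportAngle F hF z ≤ supportAngle F hF u :=
      fun u hu => hz hu
    set n := supportAngle F hF z with hn
    have hn0 : 0 < n := hNpos z
    have hlip : LipschitzOnWith (Real.toNNReal (M / (n * n)))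
        (fun u => (supportAngle F hF u)⁻¹) (Icc (-Real.pi) Real.pi) := by
      refine LipschitzOnWith.of_dist_le_mul fun a ha b hb => ?_
      have ha0 := hNpos a
      have hb0 := hNpos b
      rw [Real.coe_toNNReal _ (by positivity), Real.dist_eq, Real.dist_eq,
        inv_sub_inv ha0.ne' hb0.ne', abs_div, abs_of_pos (mul_pos ha0 hb0), div_mul_eq_mul_div]
      rw [abs_sub_comm (supportAngle F hF b)]
      gcongr
      · exact hNlip a b
      · exact hz' a ha
      · exact hz' b hb
    exact hlip.comp_absolutelyContinuousOnInterval hΦac (huIcc ▸ hΦm)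
  set x : ℝ → ℝ := fun t => (supportAngle F hF (Φ t))⁻¹ * Real.cos (Φ t) with hx
  set y : ℝ → ℝ := fun t => (supportAngle F hF (Φ t))⁻¹ * Real.sin (Φ t) with hy
  have hxac : AbsolutelyContinuousOnInterval x 0 1 := hRac.mul hcosac
  have hyac : AbsolutelyContinuousOnInterval y 0 1 := hRac.mul hsinac
  have hN01 : supportAngle F hF (Φ 0) = supportAngle F hF (Φ 1) := by
    simp only [supportAngle, hcos, hsin]
  have hx01 : x 0 = x 1 := by simp only [hx, hN01, hcos]
  have hy01 : y 0 = y 1 := by simp only [hy, hN01, hsin]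
  -- the velocity
  have hvel : ∀ᵐ t, t ∈ Icc (0:ℝ) 1 → (∃ p ∈ F, deriv y t = β * p.1 ∧ -deriv x t = β * p.2) ∧
      x t * deriv y t - y t * deriv x t = β := by
    filter_upwards [hxac.ae_differentiableAt, hyac.ae_differentiableAt] with t h1 h2 ht
    have hxd := (h1 (huIcc ▸ ht)).hasDerivAt
    have hyd := (h2 (huIcc ▸ ht)).hasDerivAt
    have hN := hNpos (Φ t)
    -- The angular velocity was chosen so that the swept area grows at the constant rate `β / 2`.
    -- This determinant identity uses only the vanishing derivative of `y cos Φ - x sin Φ`.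
    have hdet : x t * deriv y t - y t * deriv x t = β := by
      have hz : (fun s => y s * Real.cos (Φ s) - x s * Real.sin (Φ s)) = fun _ => 0 := by
        funext s; simp only [hx, hy]; ring
      have hd := (hyd.mul (hΦd t).cos).sub (hxd.mul (hΦd t).sin)
      have hd0 : HasDerivAt (fun s => y s * Real.cos (Φ s) - x s * Real.sin (Φ s)) 0 t := by
        rw [hz]; exact hasDerivAt_const _ _
      have heq := hd.unique hd0
      have hcs := Real.cos_sq_add_sin_sq (Φ t)
      have e1 : x t = (supportAngle F hF (Φ t))⁻¹ * Real.cos (Φ t) := rfl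
      have e2 : y t = (supportAngle F hF (Φ t))⁻¹ * Real.sin (Φ t) := rfl
      have e3 : x t * Real.cos (Φ t) + y t * Real.sin (Φ t) = (supportAngle F hF (Φ t))⁻¹ := by
        rw [e1, e2]; linear_combination (supportAngle F hF (Φ t))⁻¹ * hcs
      have e4 : deriv y t * Real.cos (Φ t) - deriv x t * Real.sin (Φ t) =
          β * supportAngle F hF (Φ t) := by
        have e5 : (supportAngle F hF (Φ t))⁻¹ * (supportAngle F hF (Φ t)) ^ 2 =
          supportAngle F hF (Φ t) := by field_simp
        linear_combination heq + β * (supportAngle F hF (Φ t)) ^ 2 * e3 + β * e5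
      calc x t * deriv y t - y t * deriv x t
          = (supportAngle F hF (Φ t))⁻¹ *
            (deriv y t * Real.cos (Φ t) - deriv x t * Real.sin (Φ t)) := by rw [e1, e2]; ring
        _ = β := by rw [e4]; field_simp
    -- The edge line `⟨·, p⟩ = 1` supports the polar body at the current position, so the curve
    -- stays on one side of it and is tangent to it.
    obtain ⟨p, hp, hpN⟩ := exists_eq_supportAngle hF (Φ t)
    have hle : ∀ s, x s * p.1 + y s * p.2 ≤ 1 := by
      intro s
      have h := le_supportAngle hF hp (Φ s)
      have hNs := hNpos (Φ s)
      calc x s * p.1 + y s * p.2 = (supportAngle F hF (Φ s))⁻¹ *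
            (Real.cos (Φ s) * p.1 + Real.sin (Φ s) * p.2) := by simp only [hx, hy]; ring
        _ ≤ (supportAngle F hF (Φ s))⁻¹ * supportAngle F hF (Φ s) := by gcongr
        _ = 1 := inv_mul_cancel₀ hNs.ne'
    have heq : x t * p.1 + y t * p.2 = 1 := by
      calc x t * p.1 + y t * p.2 = (supportAngle F hF (Φ t))⁻¹ *
            (Real.cos (Φ t) * p.1 + Real.sin (Φ t) * p.2) := by simp only [hx, hy]; ring
        _ = 1 := by rw [← hpN]; exact inv_mul_cancel₀ hN.ne'
    have hmax : IsLocalMax (fun s => x s * p.1 + y s * p.2) t :=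
      Eventually.of_forall fun s => by simp only [heq]; exact hle s
    have hz := hmax.hasDerivAt_eq_zero ((hxd.mul_const p.1).add (hyd.mul_const p.2))
    refine ⟨⟨p, hp, ?_, ?_⟩, hdet⟩
    · linear_combination -(deriv y t) * heq + p.1 * hdet + y t * hz
    · linear_combination (deriv x t) * heq + p.2 * hdet - x t * hz
  set s := (2 * V)⁻¹ with hs
  have hsβ : s * β = ε := by rw [hs, hβ]; field_simp
  have hcac : ∀ c : ℝ, AbsolutelyContinuousOnInterval (fun _ : ℝ => c) 0 1 := fun c =>
    (LipschitzWith.const' (K := 0) c).lipschitzOnWith.absolutelyContinuousOnInterval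
  have hdX : ∀ t, deriv (fun t => s * (y t - y 0)) t = s * deriv y t := by
    intro t; rw [deriv_const_mul_field, deriv_sub_const]
  have hdY : ∀ t, deriv (fun t => -s * (x t - x 0)) t = -s * deriv x t := by
    intro t; rw [deriv_const_mul_field, deriv_sub_const]
  refine ⟨fun t => s * (y t - y 0), fun t => -s * (x t - x 0), (hyac.sub (hcac _)).const_mul s,
    (hxac.sub (hcac _)).const_mul (-s), by simp, by simp [hy01], by simp, by simp [hx01], ?_, ?_,
    hVpos⟩
  · filter_upwards [hvel] with t ht hmem
    obtain ⟨⟨p, hp, h1, h2⟩, -⟩ := ht hmem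
    have hpL : p ∈ L := hL ▸ subset_convexHull ℝ _ (by simpa using hp)
    have e : ((deriv (fun t => s * (y t - y 0)) t, deriv (fun t => -s * (x t - x 0)) t) : ℝ × ℝ) =
        ε • p := by
      ext
      · simp only [hdX, h1, Prod.smul_fst, smul_eq_mul, ← hsβ]; ring
      · simp only [hdY, Prod.smul_snd, smul_eq_mul, ← hsβ]; linear_combination s * h2
    rw [e]
    apply gauge_le_one_of_mem
    rcases hε with rfl | rfl
    · simpa using hpL
    · rw [hsym]; simpa using hpL
  · have hint : ∫ t in (0:ℝ)..1, ((s * (y t - y 0)) * deriv (fun t => -s * (x t - x 0)) t -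
        (-s * (x t - x 0)) * deriv (fun t => s * (y t - y 0)) t) =
        ∫ t in (0:ℝ)..1, (s ^ 2 * β + (s ^ 2 * y 0 * deriv x t - s ^ 2 * x 0 * deriv y t)) := by
      refine intervalIntegral.integral_congr_ae ?_
      filter_upwards [hvel] with t ht hmem
      have := (ht (huIcc ▸ uIoc_subset_uIcc hmem)).2
      rw [hdX, hdY]
      linear_combination s ^ 2 * this
    have ix := hxac.intervalIntegrable_deriv
    have iy := hyac.intervalIntegrable_deriv
    rw [hint, intervalIntegral.integral_add intervalIntegrable_const
        ((ix.const_mul _).sub (iy.const_mul _)),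
      intervalIntegral.integral_sub (ix.const_mul _) (iy.const_mul _)]
    simp only [intervalIntegral.integral_const_mul, hxac.integral_deriv_eq_sub,
      hyac.integral_deriv_eq_sub, intervalIntegral.integral_const, hx01, hy01]
    simp only [sub_self, mul_zero, add_zero, sub_zero, smul_eq_mul, one_mul]
    rw [pow_two, mul_assoc s s β, hsβ, hs]
    field_simp
    ring

/-! ### The central elements of the Heisenberg group -/

/-- The cubical speed of a curve is integrable: it is measurable and at most the sum of the
speeds of the planar projections. -/
lemma intervalIntegrable_iSup_gauge {m : ℕ} {L : Fin m → Set (ℝ × ℝ)}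
    (hconv : ∀ i, Convex ℝ (L i)) (h0 : ∀ i, (0 : ℝ × ℝ) ∈ interior (L i))
    {d : ℝ → Fin m → ℝ × ℝ} (hd : ∀ i, IntervalIntegrable (fun t => d t i) volume 0 1) :
    IntervalIntegrable (fun t => ⨆ i, gauge (L i) (d t i)) volume 0 1 := by
  have hi := fun i => intervalIntegrable_gauge (hconv i) (h0 i) (hd i)
  refine (IntervalIntegrable.sum Finset.univ fun i _ => hi i).mono_fun
    (AEMeasurable.iSup fun i => (hi i).def'.aestronglyMeasurable.aemeasurable).aestronglyMeasurable
    (ae_of_all _ fun t => ?_)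
  have hs : 0 ≤ ∑ i, gauge (L i) (d t i) := Finset.sum_nonneg fun i _ => gauge_nonneg _
  simp only [Finset.sum_apply]
  rw [Real.norm_of_nonneg (Real.iSup_nonneg fun i => gauge_nonneg _), Real.norm_of_nonneg hs]
  exact Real.iSup_le (fun i => Finset.single_le_sum (f := fun i => gauge (L i) (d t i))
    (fun i _ => gauge_nonneg _) (Finset.mem_univ i)) hs

/-- The isoperimetric inequality for a single planar projection of an `ACCurveM`, whose derivative
is given as an integrable function instead of `deriv`. -/
lemma isoperimetric_of_integral {F : Finset (ℝ × ℝ)} {L : Set (ℝ × ℝ)}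
    (hL : L = convexHull ℝ (F : Set (ℝ × ℝ))) (hsym : L = -L) (h0 : (0 : ℝ × ℝ) ∈ interior L)
    {u d : ℝ → ℝ × ℝ} (hd : IntervalIntegrable d volume 0 1) (hu0 : u 0 = 0) (hu1 : u 1 = 0)
    (hu : ∀ t ∈ Icc (0:ℝ) 1, u t = u 0 + ∫ s in (0:ℝ)..t, d s) :
    4 * |(1/2) * ∫ t in (0:ℝ)..1, ((u t).1 * (d t).2 - (u t).2 * (d t).1)| *
      (volume (polarDual L)).toReal ≤ (∫ t in (0:ℝ)..1, gauge L (d t)) ^ 2 := by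
  have hd1 : IntervalIntegrable (fun t => (d t).1) volume 0 1 := ⟨hd.1.fst, hd.2.fst⟩
  have hd2 : IntervalIntegrable (fun t => (d t).2) volume 0 1 := ⟨hd.1.snd, hd.2.snd⟩
  have huIcc : uIcc (0:ℝ) 1 = Icc 0 1 := uIcc_of_le zero_le_one
  have h00 : (0:ℝ) ∈ uIcc (0:ℝ) 1 := left_mem_uIcc
  have hcomp : ∀ t ∈ Icc (0:ℝ) 1,
      u t = (∫ s in (0:ℝ)..t, (d s).1, ∫ s in (0:ℝ)..t, (d s).2) := by
    intro t ht
    have hdt : IntervalIntegrable d volume 0 t :=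
      hd.mono_set (by rw [huIcc, uIcc_of_le ht.1]; exact Icc_subset_Icc le_rfl ht.2)
    rw [hu t ht, hu0, zero_add, intervalIntegral.integral_of_le ht.1,
      intervalIntegral.integral_of_le ht.1, intervalIntegral.integral_of_le ht.1]
    exact integral_pair hdt.1.fst hdt.1.snd
  have hiso := isoperimetric hL hsym h0
    (hd1.absolutelyContinuousOnInterval_intervalIntegral h00)
    (hd2.absolutelyContinuousOnInterval_intervalIntegral h00)
    (by
      have h1 := congrArg Prod.fst (hcomp 1 (by simp))
      rw [hu1] at h1
      simpa using h1)
    (by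
      have h1 := congrArg Prod.snd (hcomp 1 (by simp))
      rw [hu1] at h1
      simpa using h1)
  have hder : ∀ᵐ t, t ∈ uIoc (0:ℝ) 1 →
      deriv (fun x => ∫ s in (0:ℝ)..x, (d s).1) t = (d t).1 ∧
      deriv (fun x => ∫ s in (0:ℝ)..x, (d s).2) t = (d t).2 := by
    filter_upwards [hd1.ae_hasDerivAt_integral, hd2.ae_hasDerivAt_integral] with t h1 h2 ht
    have ht' := uIoc_subset_uIcc ht
    exact ⟨(h1 ht' 0 h00).deriv, (h2 ht' 0 h00).deriv⟩
  have e1 : ∫ t in (0:ℝ)..1, ((u t).1 * (d t).2 - (u t).2 * (d t).1) =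
      ∫ t in (0:ℝ)..1, ((∫ s in (0:ℝ)..t, (d s).1) * deriv (fun x => ∫ s in (0:ℝ)..x, (d s).2) t -
        (∫ s in (0:ℝ)..t, (d s).2) * deriv (fun x => ∫ s in (0:ℝ)..x, (d s).1) t) := by
    refine intervalIntegral.integral_congr_ae ?_
    filter_upwards [hder] with t ht hmem
    rw [(ht hmem).1, (ht hmem).2, hcomp t (huIcc ▸ uIoc_subset_uIcc hmem)]
  have e2 : ∫ t in (0:ℝ)..1, gauge L (d t) =
      ∫ t in (0:ℝ)..1, gauge L (deriv (fun x => ∫ s in (0:ℝ)..x, (d s).1) t,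
        deriv (fun x => ∫ s in (0:ℝ)..x, (d s).2) t) := by
    refine intervalIntegral.integral_congr_ae ?_
    filter_upwards [hder] with t ht hmem
    rw [(ht hmem).1, (ht hmem).2]
  rw [e1, e2]
  exact hiso

/-- The scaled curve whose planar projections are `ℓ • (Xᵢ, Yᵢ)`. -/
noncomputable def ACCurveM.ofAC {m : ℕ} (ℓ : ℝ) (X Y : Fin m → ℝ → ℝ)
    (hX : ∀ i, AbsolutelyContinuousOnInterval (X i) 0 1)
    (hY : ∀ i, AbsolutelyContinuousOnInterval (Y i) 0 1) : ACCurveM m where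
  toFun t i := ℓ • (X i t, Y i t)
  deriv t i := ℓ • (_root_.deriv (X i) t, _root_.deriv (Y i) t)
  integrable i := by
    have h1 := (hX i).intervalIntegrable_deriv
    have h2 := (hY i).intervalIntegrable_deriv
    exact IntervalIntegrable.smul ⟨h1.1.prodMk h2.1, h1.2.prodMk h2.2⟩ ℓ
  integral_eq i t ht := by
    have hsub : uIcc 0 t ⊆ uIcc (0:ℝ) 1 := by
      rw [uIcc_of_le zero_le_one, uIcc_of_le ht.1]; exact Icc_subset_Icc le_rfl ht.2
    have h1 := (hX i).mono hsub
    have h2 := (hY i).mono hsub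
    have hpair : ∫ s in (0:ℝ)..t, ((_root_.deriv (X i) s, _root_.deriv (Y i) s) : ℝ × ℝ) =
        (X i t - X i 0, Y i t - Y i 0) := by
      rw [← h1.integral_deriv_eq_sub, ← h2.integral_deriv_eq_sub,
        intervalIntegral.integral_of_le ht.1, intervalIntegral.integral_of_le ht.1,
        intervalIntegral.integral_of_le ht.1]
      exact integral_pair h1.intervalIntegrable_deriv.1 h2.intervalIntegrable_deriv.1
    rw [intervalIntegral.integral_smul, hpair]
    ext <;> simp only [Prod.fst_add, Prod.snd_add, Prod.smul_fst, Prod.smul_snd, smul_eq_mul] <;>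
      ring

/-- Gluing the planar isoperimetric inequalities: a closed curve of cubical length `R` has all its
planar projections of length at most `R`, which bounds each of their areas. -/
lemma le_cubeLength {m : ℕ} (hm : 1 ≤ m)
    {L : Fin m → Set (ℝ × ℝ)} {F : Fin m → Finset (ℝ × ℝ)}
    (hL : ∀ i, L i = convexHull ℝ ((F i : Set (ℝ × ℝ))))
    (hsym : ∀ i, L i = -(L i)) (h0 : ∀ i, (0 : ℝ × ℝ) ∈ interior (L i))
    (hV : ∀ i, 0 < (volume (polarDual (L i))).toReal)
    (γ : ACCurveM m) (hγ0 : ∀ i, γ.toFun 0 i = 0) (hγ1 : ∀ i, γ.toFun 1 i = 0) :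
    2 * Real.sqrt (|∑ i, γ.area i| / ∑ i, ((volume (polarDual (L i))).toReal)⁻¹) ≤
      γ.cubeLength L := by
  have : Nonempty (Fin m) := ⟨⟨0, hm⟩⟩
  have hconv : ∀ i, Convex ℝ (L i) := fun i => hL i ▸ convex_convexHull ℝ _
  set S := ∑ i, ((volume (polarDual (L i))).toReal)⁻¹ with hS
  set R := γ.cubeLength L with hR
  have hSpos : 0 < S := Finset.sum_pos (fun i _ => inv_pos.2 (hV i)) Finset.univ_nonempty
  have hR0 : 0 ≤ R := intervalIntegral.integral_nonneg zero_le_one fun t _ =>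
    Real.iSup_nonneg fun i => gauge_nonneg _
  have harea : ∀ i, |γ.area i| ≤ R ^ 2 / 4 * ((volume (polarDual (L i))).toReal)⁻¹ := by
    intro i
    have h1 := isoperimetric_of_integral (hL i) (hsym i) (h0 i) (γ.integrable i) (hγ0 i) (hγ1 i)
      (γ.integral_eq i)
    have h2 : ∫ t in (0:ℝ)..1, gauge (L i) (γ.deriv t i) ≤ R :=
      intervalIntegral.integral_mono_on zero_le_one
        (intervalIntegrable_gauge (hconv i) (h0 i) (γ.integrable i))
        (intervalIntegrable_iSup_gauge hconv h0 γ.integrable)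
        fun t _ => le_ciSup (f := fun i => gauge (L i) (γ.deriv t i)) (finite_range _).bddAbove i
    have h3 : 0 ≤ ∫ t in (0:ℝ)..1, gauge (L i) (γ.deriv t i) :=
      intervalIntegral.integral_nonneg zero_le_one fun t _ => gauge_nonneg _
    have h4 : 4 * |γ.area i| * (volume (polarDual (L i))).toReal ≤ R ^ 2 :=
      h1.trans (pow_le_pow_left₀ h3 h2 2)
    rw [← div_eq_mul_inv, le_div_iff₀ (hV i)]
    linarith
  have hsum : |∑ i, γ.area i| ≤ R ^ 2 / 4 * S := by
    rw [hS, Finset.mul_sum]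
    exact (Finset.abs_sum_le_sum_abs _ _).trans (Finset.sum_le_sum fun i _ => harea i)
  have hsqrt : Real.sqrt (|∑ i, γ.area i| / S) ≤ R / 2 :=
    Real.sqrt_le_iff.2 ⟨by positivity, by rw [div_le_iff₀ hSpos]; linarith⟩
  linarith

/-- The cubical-like CC-norm of a central element of `H_{2m+1}(ℝ)`:
`‖((0,…,0),c)‖ = 2·√(|c| / Σᵢ vol(Lᵢ*)⁻¹)`. -/
theorem cubeCCNorm_central (m : ℕ) (hm : 1 ≤ m)
    (L : Fin m → Set (ℝ × ℝ)) (F : Fin m → Finset (ℝ × ℝ))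
    (hL : ∀ i, L i = convexHull ℝ ((F i : Set (ℝ × ℝ))))
    (hsym : ∀ i, L i = -(L i))
    (h0 : ∀ i, (0 : ℝ × ℝ) ∈ interior (L i))
    (c : ℝ) :
    cubeCCNorm L (fun _ => 0, c) =
      2 * Real.sqrt (|c| / ∑ i, ((volume (polarDual (L i))).toReal)⁻¹) := by
  have : Nonempty (Fin m) := ⟨⟨0, hm⟩⟩
  have hconv : ∀ i, Convex ℝ (L i) := fun i => hL i ▸ convex_convexHull ℝ _
  obtain ⟨ε, hε, hεc⟩ : ∃ ε : ℝ, (ε = 1 ∨ ε = -1) ∧ |c| * ε = c := by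
    rcases le_total 0 c with h | h
    · exact ⟨1, Or.inl rfl, by rw [abs_of_nonneg h, mul_one]⟩
    · exact ⟨-1, Or.inr rfl, by rw [abs_of_nonpos h]; ring⟩
  -- One curve of unit speed per coordinate plane, all with the orientation given by the sign of `c`.
  choose X Y hX hY hX0 hX1 hY0 hY1 hspeed harea hV using
    fun i => exists_optimal (hL i) (hsym i) (h0 i) hε
  set S := ∑ i, ((volume (polarDual (L i))).toReal)⁻¹ with hS
  have hSpos : 0 < S := Finset.sum_pos (fun i _ => inv_pos.2 (hV i)) Finset.univ_nonempty
  set ℓ := 2 * Real.sqrt (|c| / S) with hℓ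
  have hℓ0 : 0 ≤ ℓ := by positivity
  have hℓS : ℓ ^ 2 * S = 4 * |c| := by
    rw [hℓ, mul_pow, Real.sq_sqrt (by positivity)]
    field_simp
    ring
  set γ := ACCurveM.ofAC ℓ X Y hX hY with hγ
  have hγarea : ∑ i, γ.area i = c := by
    have h1 : ∀ i, γ.area i = ℓ ^ 2 * (ε / 4) * ((volume (polarDual (L i))).toReal)⁻¹ := by
      intro i
      have e : ∀ t, (γ.toFun t i).1 * (γ.deriv t i).2 - (γ.toFun t i).2 * (γ.deriv t i).1 =
          ℓ ^ 2 * (X i t * deriv (Y i) t - Y i t * deriv (X i) t) := by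
        intro t
        simp only [hγ, ACCurveM.ofAC, Prod.smul_fst, Prod.smul_snd, smul_eq_mul]
        ring
      rw [ACCurveM.area]
      simp only [e]
      rw [intervalIntegral.integral_const_mul, mul_left_comm, harea i]
      field_simp
    simp only [h1]
    rw [← Finset.mul_sum, ← hS]
    linear_combination ε / 4 * hℓS + hεc
  have hγlen : γ.cubeLength L ≤ ℓ := by
    have h1 : ∀ᵐ t, t ∈ Icc (0:ℝ) 1 → ⨆ i, gauge (L i) (γ.deriv t i) ≤ ℓ := by
      filter_upwards [ae_all_iff.2 hspeed] with t ht hmem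
      refine ciSup_le fun i => ?_
      have h2 : gauge (L i) (γ.deriv t i) = ℓ * gauge (L i) (deriv (X i) t, deriv (Y i) t) :=
        gauge_smul_of_nonneg hℓ0 _
      rw [h2]
      exact mul_le_of_le_one_right hℓ0 (ht i hmem)
    have h3 := intervalIntegral.integral_mono_ae_restrict zero_le_one
      (intervalIntegrable_iSup_gauge hconv h0 γ.integrable)
      (intervalIntegrable_const (c := ℓ)) ((ae_restrict_iff' measurableSet_Icc).2 h1)
    simpa [ACCurveM.cubeLength] using h3
  have hmem : γ.cubeLength L ∈ { r | ∃ γ : ACCurveM m, (∀ i, γ.toFun 0 i = 0) ∧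
      (∀ i, γ.toFun 1 i = 0) ∧ (∑ i, γ.area i) = c ∧ γ.cubeLength L = r } :=
    ⟨γ, fun i => by simp [hγ, ACCurveM.ofAC, hX0, hY0],
      fun i => by simp [hγ, ACCurveM.ofAC, hX1, hY1], hγarea, rfl⟩
  refine le_antisymm ((csInf_le ⟨0, ?_⟩ hmem).trans hγlen) (le_csInf ⟨_, hmem⟩ ?_)
  · rintro r ⟨δ, -, -, -, rfl⟩
    exact intervalIntegral.integral_nonneg zero_le_one fun t _ =>
      Real.iSup_nonneg fun i => gauge_nonneg _
  · rintro r ⟨δ, hδ0, hδ1, hδ, rfl⟩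
    have h1 := le_cubeLength hm hL hsym h0 hV δ hδ0 hδ1
    rwa [hδ] at h1
end

section
/- (Almost dead ends in H₃(ℤ) for word metrics.) Let S be any finite symmetric generating set of H₃(ℤ). There exist constants C, M > 0 and D₀ such that for every D ≥ D₀ and every integer n ≥ C·D⁴, the element g = zⁿ = (0,0,n) satisfies: for all h ∈ H₃(ℤ) with ‖h‖_S ≤ D, one has ‖g·h‖_S ≤ ‖g‖_S + M. -/
/-!
Write `N` for the word length of `zⁿ`. Crude estimates show that `n` and `N²` agree up to constants
(`abs_c_le`, `sq_wl_z_le`), so a word length `d` of `h` with `d⁴ ≤ n` satisfies `d² = O(N)`. Two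
facts combine.

* Central errors of size `O(N)` are free (`absorb`). A word of length about `N` whose last
  coordinate is of order `N²` has prefixes `p` with `|p.a|` of order `N`, and conjugating `p` by
  `(0, j, 0)` with `j` bounded multiplies the word by `z ^ (j * p.a)`. Since `p.a` moves in bounded
  steps as the prefix grows, all `z ^ m` with `m = O(N)` are reached up to a bounded error.

* Hence it is enough to reach `zⁿ * h` up to a central error `O(N)` (`surgery`). As `zⁿ` is central,
  a geodesic word for it may be rotated to end in any of its blocks `v`. Let `q` be the generator
  maximising `det q h` among projections to `ℤ²`. If `v` has length `O(d)` and `det q v` is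
  `-det q h + O(1)`, then the projection of `v * h` is within `O(1)` of a multiple `k * q`. Pairing
  with `h` gives `|k| * det q h ≤ |v| * det q h`, so `q ^ k` is no longer than `v`
  (`exists_replacement`). Replacing `v * h` by `q ^ k` and a bounded correction changes only the last
  coordinate, by `O(d²) = O(N)`.

Such a block exists (`find_block`) because otherwise the word, which is closed in the plane, would
never drop by `det q h` over `K * det q h` consecutive steps, and so would stay in a strip of
width about `N / K` around the line spanned by `q`. The area it encloses would be `O(N² / K)`
(`area_le`), which contradicts `n ≥ c * N²` once `K` is large.
-/

/-- The discrete Heisenberg group `H₃(ℤ)`: `ℤ³` with group law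
`(a,b,c)·(a',b',c') = (a+a', b+b', c+c'+ab')`. -/
@[ext] structure H3Z where
  a : ℤ
  b : ℤ
  c : ℤ

namespace H3Z

instance : Mul H3Z := ⟨fun g h => ⟨g.a + h.a, g.b + h.b, g.c + h.c + g.a * h.b⟩⟩
instance : One H3Z := ⟨⟨0, 0, 0⟩⟩
instance : Inv H3Z := ⟨fun g => ⟨-g.a, -g.b, g.a * g.b - g.c⟩⟩

@[simp] lemma mul_a (g h : H3Z) : (g * h).a = g.a + h.a := rfl
@[simp] lemma mul_b (g h : H3Z) : (g * h).b = g.b + h.b := rfl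
@[simp] lemma mul_c (g h : H3Z) : (g * h).c = g.c + h.c + g.a * h.b := rfl
@[simp] lemma one_a : (1 : H3Z).a = 0 := rfl
@[simp] lemma one_b : (1 : H3Z).b = 0 := rfl
@[simp] lemma one_c : (1 : H3Z).c = 0 := rfl
@[simp] lemma inv_a (g : H3Z) : g⁻¹.a = -g.a := rfl
@[simp] lemma inv_b (g : H3Z) : g⁻¹.b = -g.b := rfl
@[simp] lemma inv_c (g : H3Z) : g⁻¹.c = g.a * g.b - g.c := rfl

instance : Group H3Z where
  mul_assoc g h k := by ext <;> simp <;> ring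
  one_mul g := by ext <;> simp
  mul_one g := by ext <;> simp
  inv_mul_cancel g := by ext <;> simp [mul_comm]

end H3Z

/-- The word length of `g` with respect to a generating set `S`: the least `n` such that
`g` is a product of `n` elements of `S`. -/
noncomputable def wordLength {G : Type*} [Monoid G] (S : Set G) (g : G) : ℕ :=
  sInf { n | ∃ l : List G, l.length = n ∧ (∀ x ∈ l, x ∈ S) ∧ l.prod = g }

namespace AlmostDeadEnds

open H3Z

/-! ### Word length -/

section Word

variable {S : Set H3Z}

lemma wl_le_length {l : List H3Z} (hl : ∀ x ∈ l, x ∈ S) : wordLength S l.prod ≤ l.length :=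
  Nat.sInf_le ⟨l, rfl, hl, rfl⟩

lemma exists_word (hsymm : ∀ s ∈ S, s⁻¹ ∈ S) (hgen : Subgroup.closure S = ⊤) (g : H3Z) :
    ∃ l : List H3Z, l.length = wordLength S g ∧ (∀ x ∈ l, x ∈ S) ∧ l.prod = g := by
  have hne : { n | ∃ l : List H3Z, l.length = n ∧ (∀ x ∈ l, x ∈ S) ∧ l.prod = g }.Nonempty := by
    have hg : g ∈ Subgroup.closure S := by rw [hgen]; trivial
    rw [← Subgroup.mem_toSubmonoid, Subgroup.closure_toSubmonoid] at hg
    obtain ⟨l, hl, hp⟩ := Submonoid.exists_list_of_mem_closure hg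
    refine ⟨l.length, l, rfl, fun x hx => ?_, hp⟩
    rcases hl x hx with h | h
    · exact h
    · simpa using hsymm _ (Set.mem_inv.1 h)
  exact Nat.sInf_mem hne

lemma wl_one : wordLength S 1 = 0 := by
  have := wl_le_length (S := S) (l := []) (by simp)
  simpa using this

lemma wl_mem {s : H3Z} (hs : s ∈ S) : wordLength S s ≤ 1 := by
  have := wl_le_length (S := S) (l := [s]) (by simpa using hs)
  simpa using this

variable (hsymm : ∀ s ∈ S, s⁻¹ ∈ S) (hgen : Subgroup.closure S = ⊤)
include hsymm hgen

lemma wl_mul (g h : H3Z) : wordLength S (g * h) ≤ wordLength S g + wordLength S h := by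
  obtain ⟨l, h1, h2, h3⟩ := exists_word hsymm hgen g
  obtain ⟨l', h1', h2', h3'⟩ := exists_word hsymm hgen h
  have := wl_le_length (S := S) (l := l ++ l') (by
    intro x hx
    rcases List.mem_append.1 hx with hx | hx
    · exact h2 x hx
    · exact h2' x hx)
  rw [List.prod_append, h3, h3', List.length_append, h1, h1'] at this
  exact this

lemma wl_inv (g : H3Z) : wordLength S g⁻¹ ≤ wordLength S g := by
  obtain ⟨l, h1, h2, h3⟩ := exists_word hsymm hgen g
  have := wl_le_length (S := S) (l := (l.map (fun x => x⁻¹)).reverse) (by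
    intro x hx
    simp only [List.mem_reverse, List.mem_map] at hx
    obtain ⟨y, hy, rfl⟩ := hx
    exact hsymm _ (h2 y hy))
  rw [← List.prod_inv_reverse, h3] at this
  simpa [h1] using this

lemma wl_pow (g : H3Z) (k : ℕ) : wordLength S (g ^ k) ≤ k * wordLength S g := by
  induction k with
  | zero => simp [wl_one]
  | succ k ih =>
    rw [pow_succ]
    have := wl_mul hsymm hgen (g ^ k) g
    rw [add_mul, one_mul]
    omega

lemma wl_zpow (g : H3Z) (k : ℤ) : wordLength S (g ^ k) ≤ k.natAbs * wordLength S g := by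
  rcases Int.natAbs_eq k with h | h
  · conv_lhs => rw [h]
    rw [zpow_natCast]
    exact wl_pow hsymm hgen g _
  · conv_lhs => rw [h]
    rw [zpow_neg, zpow_natCast]
    exact (wl_inv hsymm hgen _).trans (wl_pow hsymm hgen g _)

end Word

/-! ### Coordinates -/

lemma zpow_a (g : H3Z) (k : ℤ) : (g ^ k).a = k * g.a := by
  induction k using Int.induction_on with
  | zero => simp
  | succ i ih => rw [zpow_add_one, mul_a, ih]; ring
  | pred i ih => rw [zpow_sub_one, mul_a, ih, inv_a]; ring

lemma zpow_b (g : H3Z) (k : ℤ) : (g ^ k).b = k * g.b := by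
  induction k using Int.induction_on with
  | zero => simp
  | succ i ih => rw [zpow_add_one, mul_b, ih]; ring
  | pred i ih => rw [zpow_sub_one, mul_b, ih, inv_b]; ring

lemma zpow_c (g : H3Z) (hg : g.a * g.b = 0) (k : ℤ) : (g ^ k).c = k * g.c := by
  induction k using Int.induction_on with
  | zero => simp
  | succ i ih =>
    rw [zpow_add_one, mul_c, ih, zpow_a, mul_assoc, hg]; ring
  | pred i ih =>
    rw [zpow_sub_one, mul_c, ih, inv_b, inv_c, zpow_a, hg]
    linear_combination (i : ℤ) * hg

/-- Normal form `x ^ a * y ^ b * z ^ (c - a * b)`. -/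
lemma eq_zpow (a b c : ℤ) : (⟨a, b, c⟩ : H3Z) =
    (⟨1, 0, 0⟩ : H3Z) ^ a * (⟨0, 1, 0⟩ : H3Z) ^ b * (⟨0, 0, 1⟩ : H3Z) ^ (c - a * b) := by
  ext
  · simp [zpow_a]
  · simp [zpow_b]
  · simp [zpow_a, zpow_b, zpow_c]

/-- The data attached to the generating set: `R` bounds the coordinates of the generators, and `E`
bounds the word lengths of the three standard elements. -/
structure Setup (S : Set H3Z) (R E : ℤ) : Prop where
  fin : S.Finite
  symm : ∀ s ∈ S, s⁻¹ ∈ S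
  gen : Subgroup.closure S = ⊤
  R_pos : 1 ≤ R
  E_pos : 1 ≤ E
  ha : ∀ s ∈ S, |s.a| ≤ R
  hb : ∀ s ∈ S, |s.b| ≤ R
  hc : ∀ s ∈ S, |s.c| ≤ R
  hx : (wordLength S (⟨1, 0, 0⟩ : H3Z) : ℤ) ≤ E
  hy : (wordLength S (⟨0, 1, 0⟩ : H3Z) : ℤ) ≤ E
  hz : (wordLength S (⟨0, 0, 1⟩ : H3Z) : ℤ) ≤ E

lemma exists_setup {S : Set H3Z} (hfin : S.Finite) (hsymm : ∀ s ∈ S, s⁻¹ ∈ S)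
    (hgen : Subgroup.closure S = ⊤) : ∃ R E : ℤ, Setup S R E := by
  obtain ⟨A, hA⟩ := (hfin.image (fun s : H3Z => |s.a|)).bddAbove
  obtain ⟨B, hB⟩ := (hfin.image (fun s : H3Z => |s.b|)).bddAbove
  obtain ⟨C, hC⟩ := (hfin.image (fun s : H3Z => |s.c|)).bddAbove
  refine ⟨1 + |A| + |B| + |C|, 1 + wordLength S (⟨1, 0, 0⟩ : H3Z) +
    wordLength S (⟨0, 1, 0⟩ : H3Z) + wordLength S (⟨0, 0, 1⟩ : H3Z),
    hfin, hsymm, hgen, by linarith [abs_nonneg A, abs_nonneg B, abs_nonneg C], by omega, ?_, ?_, ?_, by omega, by omega, by omega⟩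
  all_goals
    intro s hs
    have h1 : |s.a| ≤ A := hA ⟨s, hs, rfl⟩
    have h2 : |s.b| ≤ B := hB ⟨s, hs, rfl⟩
    have h3 : |s.c| ≤ C := hC ⟨s, hs, rfl⟩
    have := le_abs_self A
    have := le_abs_self B
    have := le_abs_self C
    have := abs_nonneg A
    have := abs_nonneg B
    have := abs_nonneg C
    linarith

section

variable {S : Set H3Z} {R E : ℤ} (hS : Setup S R E)
include hS

namespace Setup

lemma word (g : H3Z) :
    ∃ l : List H3Z, l.length = wordLength S g ∧ (∀ x ∈ l, x ∈ S) ∧ l.prod = g :=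
  exists_word hS.symm hS.gen g

lemma mul_le (g h : H3Z) :
    (wordLength S (g * h) : ℤ) ≤ wordLength S g + wordLength S h := by
  exact_mod_cast wl_mul hS.symm hS.gen g h

lemma inv_le (g : H3Z) : (wordLength S g⁻¹ : ℤ) ≤ wordLength S g := by
  exact_mod_cast wl_inv hS.symm hS.gen g

lemma zpow_le {g : H3Z} {B : ℤ} (hg : (wordLength S g : ℤ) ≤ B) (k : ℤ) :
    (wordLength S (g ^ k) : ℤ) ≤ |k| * B := by
  have h := wl_zpow hS.symm hS.gen g k
  have h' : (wordLength S (g ^ k) : ℤ) ≤ (k.natAbs : ℤ) * wordLength S g := by exact_mod_cast h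
  rw [Int.natCast_natAbs] at h'
  exact h'.trans (mul_le_mul_of_nonneg_left hg (abs_nonneg k))

lemma coord_le (a b c : ℤ) :
    (wordLength S (⟨a, b, c⟩ : H3Z) : ℤ) ≤ E * (|a| + |b| + |c - a * b|) := by
  rw [eq_zpow a b c]
  have h1 := hS.zpow_le hS.hx a
  have h2 := hS.zpow_le hS.hy b
  have h3 := hS.zpow_le hS.hz (c - a * b)
  have h4 := hS.mul_le ((⟨1, 0, 0⟩ : H3Z) ^ a * (⟨0, 1, 0⟩ : H3Z) ^ b)
    ((⟨0, 0, 1⟩ : H3Z) ^ (c - a * b))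
  have h5 := hS.mul_le ((⟨1, 0, 0⟩ : H3Z) ^ a) ((⟨0, 1, 0⟩ : H3Z) ^ b)
  linarith

end Setup

end

/-! ### Prefixes of a word -/

lemma take_step {S : Set H3Z} {l : List H3Z} (hl : ∀ x ∈ l, x ∈ S) (k : ℕ) :
    (l.take (k + 1)).prod = (l.take k).prod ∨
      ∃ s ∈ S, (l.take (k + 1)).prod = (l.take k).prod * s := by
  by_cases h : k < l.length
  · right
    exact ⟨l[k], hl _ (List.getElem_mem h), List.prod_take_succ l k h⟩
  · left
    rw [List.take_of_length_le (by omega), List.take_of_length_le (by omega)]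

/-- A function on the group that changes by at most `B` at each letter of a word is bounded by
`B` times the length. -/
lemma abs_prod_le {S : Set H3Z} {l : List H3Z} (hl : ∀ x ∈ l, x ∈ S) (F : H3Z → ℤ) (h1 : F 1 = 0)
    {B : ℤ} (hB : 0 ≤ B)
    (hF : ∀ k : ℕ, ∀ s ∈ S, |F ((l.take k).prod * s) - F (l.take k).prod| ≤ B) :
    |F l.prod| ≤ l.length * B := by
  have key : ∀ k : ℕ, |F (l.take k).prod| ≤ k * B := by
    intro k
    induction k with
    | zero => simp [h1]
    | succ k ih =>
      push_cast
      rcases take_step hl k with h | ⟨s, hs, h⟩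
      · rw [h]; linarith
      · have h2 := hF k s hs
        rw [h]
        have h3 := abs_add_le (F ((l.take k).prod * s) - F (l.take k).prod) (F (l.take k).prod)
        rw [sub_add_cancel] at h3
        linarith
  have := key l.length
  rwa [List.take_length] at this

lemma abs_hom_le {S : Set H3Z} {l : List H3Z} (hl : ∀ x ∈ l, x ∈ S) (F : H3Z → ℤ)
    (hF : ∀ g h, F (g * h) = F g + F h) {B : ℤ} (hB : 0 ≤ B) (hs : ∀ s ∈ S, |F s| ≤ B) :
    |F l.prod| ≤ l.length * B := by
  refine abs_prod_le hl F ?_ hB ?_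
  · have := hF 1 1
    rw [one_mul] at this
    linarith
  · intro k s h
    rw [hF, add_sub_cancel_left]
    exact hs s h

/-- Discrete intermediate value theorem: a sequence with upward steps at most `B` cannot jump over
the window `[t, t + B]`. -/
lemma discrete_ivt (f : ℕ → ℤ) {B t : ℤ} (h0 : f 0 = 0) (hf : ∀ k, f (k + 1) ≤ f k + B)
    (hB : 0 ≤ B) (ht : 0 ≤ t) {K : ℕ} (hK : t ≤ f K) :
    ∃ k ≤ K, t ≤ f k ∧ f k ≤ t + B := by
  classical
  have hex : ∃ k, t ≤ f k := ⟨K, hK⟩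
  refine ⟨Nat.find hex, Nat.find_min' hex hK, Nat.find_spec hex, ?_⟩
  rcases hk : Nat.find hex with _ | k
  · rw [h0]; linarith
  · have h1 := Nat.find_min hex (m := k) (by omega)
    have h2 := hf k
    linarith

/-! ### Crude size estimates -/

section

variable {S : Set H3Z} {R E : ℤ} (hS : Setup S R E)
include hS

namespace Setup

lemma abs_a_le {l : List H3Z} (hl : ∀ x ∈ l, x ∈ S) : |l.prod.a| ≤ l.length * R :=
  abs_hom_le hl (fun g => g.a) (fun _ _ => rfl) (by linarith [hS.R_pos]) hS.ha

lemma abs_b_le {l : List H3Z} (hl : ∀ x ∈ l, x ∈ S) : |l.prod.b| ≤ l.length * R :=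
  abs_hom_le hl (fun g => g.b) (fun _ _ => rfl) (by linarith [hS.R_pos]) hS.hb

lemma abs_c_le_of {l : List H3Z} (hl : ∀ x ∈ l, x ∈ S) {X : ℤ}
    (hX : ∀ k : ℕ, |(l.take k).prod.a| ≤ X) : |l.prod.c| ≤ l.length * (R + R * X) := by
  have hR := hS.R_pos
  have hX0 : 0 ≤ X := (abs_nonneg _).trans (hX 0)
  refine abs_prod_le hl (fun g => g.c) rfl (by positivity) ?_
  intro k s hs
  have e : ((l.take k).prod * s).c - (l.take k).prod.c = s.c + (l.take k).prod.a * s.b := by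
    simp; ring
  simp only [e]
  have h1 := hS.hc s hs
  have h2 := hS.hb s hs
  have h3 : |(l.take k).prod.a * s.b| ≤ X * R := by
    rw [abs_mul]
    exact mul_le_mul (hX k) h2 (abs_nonneg _) hX0
  have h4 := abs_add_le s.c ((l.take k).prod.a * s.b)
  linarith

lemma abs_c_le {l : List H3Z} (hl : ∀ x ∈ l, x ∈ S) :
    |l.prod.c| ≤ 2 * R ^ 2 * (l.length : ℤ) ^ 2 := by
  have hR := hS.R_pos
  have h := hS.abs_c_le_of hl (X := l.length * R) (by
    intro k
    have h1 := hS.abs_a_le (l := l.take k) (fun x hx => hl x (List.mem_of_mem_take hx))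
    refine h1.trans (mul_le_mul_of_nonneg_right ?_ (by linarith))
    exact_mod_cast List.length_take_le' k l)
  have h0 : (0 : ℤ) ≤ l.length := by positivity
  have h2 : (l.length : ℤ) ≤ (l.length : ℤ) ^ 2 := by
    have := Nat.le_self_pow (n := 2) (by norm_num) l.length
    exact_mod_cast this
  have h3 : R ≤ R ^ 2 := by nlinarith
  nlinarith [mul_le_mul h2 h3 (by linarith) (by positivity)]

/-- Word lengths of central elements grow at most like a square root. -/
lemma sq_wl_z_le {n : ℤ} (hn : 1 ≤ n) :
    (wordLength S (⟨0, 0, n⟩ : H3Z) : ℤ) ^ 2 ≤ 100 * E ^ 2 * n := by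
  have hE := hS.E_pos
  obtain ⟨N, rfl⟩ : ∃ N : ℕ, n = N := ⟨n.toNat, by omega⟩
  have hk1 := Nat.sqrt_le' N
  have hk2 := Nat.lt_succ_sqrt' N
  have hk3 : 1 ≤ Nat.sqrt N := Nat.le_sqrt'.2 (by simpa using hn)
  set k := Nat.sqrt N
  obtain ⟨r, hr⟩ : ∃ r : ℤ, (N : ℤ) = (k : ℤ) ^ 2 + r := ⟨N - (k : ℤ) ^ 2, by ring⟩
  have hr0 : 0 ≤ r := by
    have : (k : ℤ) ^ 2 ≤ N := by exact_mod_cast hk1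
    linarith
  have hr1 : r ≤ 2 * k := by
    have : (N : ℤ) < ((k : ℤ) + 1) ^ 2 := by exact_mod_cast hk2
    nlinarith
  have hk0 : (1 : ℤ) ≤ k := by exact_mod_cast hk3
  -- `[x ^ k, y ^ k] = z ^ (k ^ 2)` and `[x ^ r, y] = z ^ r`, with `k` the integer square root of `n`.
  have e : (⟨0, 0, (N : ℤ)⟩ : H3Z) = (⟨k, 0, 0⟩ * ⟨0, k, 0⟩) * (⟨-k, 0, 0⟩ * ⟨0, -k, 0⟩) *
      ((⟨r, 0, 0⟩ * ⟨0, 1, 0⟩) * (⟨-r, 0, 0⟩ * ⟨0, -1, 0⟩)) := by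
    ext <;> simp [hr]; ring
  have f1 := hS.coord_le k 0 0
  have f2 := hS.coord_le 0 k 0
  have f3 := hS.coord_le (-k) 0 0
  have f4 := hS.coord_le 0 (-k) 0
  have f5 := hS.coord_le r 0 0
  have f6 := hS.coord_le 0 1 0
  have f7 := hS.coord_le (-r) 0 0
  have f8 := hS.coord_le 0 (-1) 0
  simp only [abs_neg, abs_zero, zero_mul, mul_zero, sub_zero, add_zero, zero_add,
    abs_of_nonneg hr0, Nat.abs_cast, abs_one] at f1 f2 f3 f4 f5 f6 f7 f8
  have g0 := hS.mul_le ((⟨k, 0, 0⟩ * ⟨0, k, 0⟩) * (⟨-k, 0, 0⟩ * ⟨0, -k, 0⟩))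
      ((⟨r, 0, 0⟩ * ⟨0, 1, 0⟩) * (⟨-r, 0, 0⟩ * ⟨0, -1, 0⟩))
  have g1 := hS.mul_le (⟨k, 0, 0⟩ * ⟨0, k, 0⟩) (⟨-k, 0, 0⟩ * ⟨0, -k, 0⟩)
  have g2 := hS.mul_le (⟨r, 0, 0⟩ * ⟨0, 1, 0⟩) (⟨-r, 0, 0⟩ * ⟨0, -1, 0⟩)
  have g3 := hS.mul_le ⟨k, 0, 0⟩ ⟨0, k, 0⟩
  have g4 := hS.mul_le ⟨-k, 0, 0⟩ ⟨0, -k, 0⟩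
  have g5 := hS.mul_le ⟨r, 0, 0⟩ ⟨0, 1, 0⟩
  have g6 := hS.mul_le ⟨-r, 0, 0⟩ ⟨0, -1, 0⟩
  rw [← e] at g0
  have hlen : (wordLength S (⟨0, 0, (N : ℤ)⟩ : H3Z) : ℤ) ≤ E * (10 * k) := by
    have h1 : (wordLength S (⟨0, 0, (N : ℤ)⟩ : H3Z) : ℤ) ≤ E * (4 * k + 2 * r + 2) := by linarith
    refine h1.trans (mul_le_mul_of_nonneg_left ?_ (by linarith))
    linarith
  have hsq := pow_le_pow_left₀ (by positivity) hlen 2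
  have : (k : ℤ) ^ 2 ≤ N := by exact_mod_cast hk1
  nlinarith [mul_le_mul_of_nonneg_left this (sq_nonneg E)]

end Setup

end

/-! ### A block of a geodesic pointing away from `h` -/

/-- The determinant of the projections of `g` and `h` to `ℤ²`. -/
def det (g h : H3Z) : ℤ := g.a * h.b - g.b * h.a

lemma det_mul_left (g g' h : H3Z) : det (g * g') h = det g h + det g' h := by
  simp [det]; ring

lemma det_mul_right (g h h' : H3Z) : det g (h * h') = det g h + det g h' := by
  simp [det]; ring

lemma abs_det_le {g h : H3Z} {A B : ℤ} (ga : |g.a| ≤ A) (gb : |g.b| ≤ A)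
    (ha : |h.a| ≤ B) (hb : |h.b| ≤ B) : |det g h| ≤ 2 * (A * B) := by
  have hA : 0 ≤ A := (abs_nonneg _).trans ga
  have h1 : |g.a * h.b| ≤ A * B := by
    rw [abs_mul]; exact mul_le_mul ga hb (abs_nonneg _) hA
  have h2 : |g.b * h.a| ≤ A * B := by
    rw [abs_mul]; exact mul_le_mul gb ha (abs_nonneg _) hA
  have := abs_sub (g.a * h.b) (g.b * h.a)
  unfold det
  linarith

lemma bound_of_le_add_sqrt {N a b T B : ℤ} (hN : 1 ≤ N) (h : N ≤ a + b * T)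
    (hT : T ^ 2 ≤ B * N) : N ≤ 2 * a ^ 2 + 2 * b ^ 2 * B := by
  have h1 : N ^ 2 ≤ (a + b * T) ^ 2 := pow_le_pow_left₀ (by linarith) h 2
  have h2 : b ^ 2 * T ^ 2 ≤ b ^ 2 * (B * N) := mul_le_mul_of_nonneg_left hT (sq_nonneg b)
  have h3 : a ^ 2 ≤ a ^ 2 * N := le_mul_of_one_le_right (sq_nonneg a) hN
  have h4 : N * N ≤ (2 * a ^ 2 + 2 * b ^ 2 * B) * N := by nlinarith [sq_nonneg (a - b * T)]
  exact le_of_mul_le_mul_right h4 (by linarith)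

/-- If no stretch of `K * T` steps of `x` contains a drop of size `T`, then `x` drops by at most
`1 / K` per step on average. -/
lemma drop_bound (x : ℕ → ℤ) {K T : ℕ} (hK : 1 ≤ K) (hT : 1 ≤ T)
    (h : ∀ j i, i ≤ K * T → x j - x (j + i) < T) (k : ℕ) :
    ∀ j, (K : ℤ) * (x j - x (j + k)) ≤ k + K * T := by
  induction k using Nat.strong_induction_on with
  | _ k ih =>
    intro j
    by_cases hk : k ≤ K * T
    · have h1 := h j k hk
      have : (K : ℤ) * (x j - x (j + k)) ≤ K * T :=
        mul_le_mul_of_nonneg_left h1.le (by positivity)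
      have : (0 : ℤ) ≤ k := by positivity
      linarith
    · push Not at hk
      have hpos : 1 ≤ K * T := Nat.mul_pos hK hT
      have h1 := h j (K * T) le_rfl
      have h2 := ih (k - K * T) (by omega) (j + K * T)
      rw [show j + K * T + (k - K * T) = j + k by omega, Nat.cast_sub hk.le] at h2
      push_cast at h2
      have h3 : (K : ℤ) * (x j - x (j + K * T)) ≤ K * T :=
        mul_le_mul_of_nonneg_left h1.le (by positivity)
      linarith

section

variable {S : Set H3Z} {R E : ℤ} (hS : Setup S R E)
include hS

namespace Setup

/-- Isoperimetric input: a closed word whose prefixes stay in the strip `K * |det q ·| ≤ Y`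
encloses area at most of order `Y / K` times its length. -/
lemma area_le {l : List H3Z} (hl : ∀ x ∈ l, x ∈ S) {n : ℤ} (hp : l.prod = ⟨0, 0, n⟩)
    {q : H3Z} (hqa : |q.a| ≤ R) (hqb : |q.b| ≤ R) (hq : 1 ≤ q.a ^ 2 + q.b ^ 2) (hn : 0 ≤ n)
    {K Y : ℤ} (hK : 0 ≤ K) (hY : ∀ k : ℕ, K * |det q (l.take k).prod| ≤ Y) :
    2 * K * n ≤ l.length * (K * (4 * R ^ 3 + 6 * R ^ 4) + 4 * R ^ 2 * Y) := by
  have hR := hS.R_pos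
  have hY0 : 0 ≤ Y := (mul_nonneg hK (abs_nonneg _)).trans (hY 0)
  -- `F` is, up to the factor `K * |q|²`, twice the area swept out, measured in the coordinates
  -- `(q · g, det q g)` and normalised so that a step changes it through `det q g` only.
  have h := abs_prod_le hl (fun g => K * ((q.a ^ 2 + q.b ^ 2) * (2 * g.c - g.a * g.b)
      - (q.a * g.a + q.b * g.b) * det q g)) (by simp [det])
    (B := K * (4 * R ^ 3 + 6 * R ^ 4) + 4 * R ^ 2 * Y) (by positivity) (by
      intro k s hs
      have hY' := hY k
      generalize (l.take k).prod = g at hY'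
      have sa := hS.ha s hs
      have sb := hS.hb s hs
      have sc := hS.hc s hs
      have hd : |det q s| ≤ 2 * (R * R) := abs_det_le hqa hqb sa sb
      have hqs : |q.a * s.a + q.b * s.b| ≤ 2 * (R * R) := by
        refine (abs_add_le _ _).trans ?_
        rw [abs_mul, abs_mul]
        have := mul_le_mul hqa sa (abs_nonneg _) (by linarith)
        have := mul_le_mul hqb sb (abs_nonneg _) (by linarith)
        linarith
      have hqq : |q.a ^ 2 + q.b ^ 2| ≤ 2 * (R * R) := by
        rw [abs_of_nonneg (by positivity)]
        have := sq_le_sq' (abs_le.1 hqa).1 (abs_le.1 hqa).2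
        have := sq_le_sq' (abs_le.1 hqb).1 (abs_le.1 hqb).2
        linarith
      have hcs : |2 * s.c - s.a * s.b| ≤ 2 * R + R * R := by
        refine (abs_sub _ _).trans ?_
        rw [abs_mul, abs_mul, abs_two]
        have := mul_le_mul sa sb (abs_nonneg _) (by linarith)
        linarith
      have e : K * ((q.a ^ 2 + q.b ^ 2) * (2 * (g * s).c - (g * s).a * (g * s).b)
          - (q.a * (g * s).a + q.b * (g * s).b) * det q (g * s))
          - K * ((q.a ^ 2 + q.b ^ 2) * (2 * g.c - g.a * g.b)
          - (q.a * g.a + q.b * g.b) * det q g)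
          = K * ((q.a ^ 2 + q.b ^ 2) * (2 * s.c - s.a * s.b)
            - (q.a * s.a + q.b * s.b) * det q s)
            - 2 * (q.a * s.a + q.b * s.b) * (K * det q g) := by
        simp [det]; ring
      simp only [e]
      have t1 : |(q.a ^ 2 + q.b ^ 2) * (2 * s.c - s.a * s.b)| ≤ 2 * (R * R) * (2 * R + R * R) := by
        rw [abs_mul]
        exact mul_le_mul hqq hcs (abs_nonneg _) (by positivity)
      have t2 : |(q.a * s.a + q.b * s.b) * det q s| ≤ 2 * (R * R) * (2 * (R * R)) := by
        rw [abs_mul]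
        exact mul_le_mul hqs hd (abs_nonneg _) (by positivity)
      have t3 : |2 * (q.a * s.a + q.b * s.b) * (K * det q g)| ≤ 2 * (2 * (R * R)) * Y := by
        rw [abs_mul, abs_mul, abs_mul, abs_two, abs_of_nonneg hK]
        exact mul_le_mul (by linarith) hY' (by positivity) (by positivity)
      have t4 : |K * ((q.a ^ 2 + q.b ^ 2) * (2 * s.c - s.a * s.b)
            - (q.a * s.a + q.b * s.b) * det q s)| ≤ K * (4 * R ^ 3 + 6 * R ^ 4) := by
        rw [abs_mul, abs_of_nonneg hK]
        refine mul_le_mul_of_nonneg_left ((abs_sub _ _).trans ?_) hK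
        linarith
      refine (abs_sub _ _).trans ?_
      linarith)
  simp only [hp, det, mul_zero, sub_zero, add_zero] at h
  have h' := (le_abs_self _).trans h
  have h2 : 2 * K * n * 1 ≤ 2 * K * n * (q.a ^ 2 + q.b ^ 2) :=
    mul_le_mul_of_nonneg_left hq (by positivity)
  linarith

/-- A long closed word enclosing quadratic area contains a short block in which `det q ·` drops
by `T`, up to a bounded error. -/
lemma find_block (κ B : ℤ) (hκ : 1 ≤ κ) (hB : 0 ≤ B) : ∃ K : ℕ, ∃ N₀ : ℤ, ∀ l : List H3Z, (∀ x ∈ l, x ∈ S) →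
    ∀ n : ℤ, l.prod = ⟨0, 0, n⟩ → (l.length : ℤ) ^ 2 ≤ κ * n → N₀ ≤ l.length →
    ∀ q : H3Z, |q.a| ≤ R → |q.b| ≤ R → 1 ≤ q.a ^ 2 + q.b ^ 2 →
    ∀ T : ℕ, 1 ≤ T → (T : ℤ) ^ 2 ≤ B * l.length →
    ∃ j i : ℕ, i ≤ K * T ∧ (T : ℤ) ≤ det q (l.take j).prod - det q (l.take (j + i)).prod ∧
      det q (l.take j).prod - det q (l.take (j + i)).prod ≤ T + 2 * (R * R) := by
  have hR := hS.R_pos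
  obtain ⟨K, hK⟩ : ∃ K : ℕ, (K : ℤ) = 4 * R ^ 2 * κ :=
    ⟨(4 * R ^ 2 * κ).toNat, Int.toNat_of_nonneg (by positivity)⟩
  set CF := 4 * R ^ 3 + 6 * R ^ 4 with hCF
  have hK1 : (1 : ℤ) ≤ K := by
    rw [hK]
    nlinarith [mul_pos (pow_pos (show 0 < R by linarith) 2) (show 0 < κ by linarith)]
  refine ⟨K, 2 * (K * CF) ^ 2 + 2 * (4 * R ^ 2 * K) ^ 2 * B + 1, ?_⟩
  intro l hl n hp hn hN q hqa hqb hq T hT hTB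
  have hlen1 : (1 : ℤ) ≤ l.length := by
    have : 0 ≤ 2 * (K * CF) ^ 2 + 2 * (4 * R ^ 2 * K) ^ 2 * B := by positivity
    linarith
  have hn0 : 0 ≤ n := by
    by_contra hneg
    push Not at hneg
    nlinarith
  -- Without a drop of size `T`, the whole word stays in a strip too thin for the area `n`.
  have hbig : ∃ j i : ℕ, i ≤ K * T ∧
      (T : ℤ) ≤ det q (l.take j).prod - det q (l.take (j + i)).prod := by
    by_contra hcon
    push Not at hcon
    have hd := drop_bound (fun k => det q (l.take k).prod) (K := K) (T := T)
      (by exact_mod_cast hK1) hT hcon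
    have hY : ∀ k : ℕ, (K : ℤ) * |det q (l.take k).prod| ≤ l.length + K * T := by
      intro k
      rw [← abs_of_nonneg (show (0 : ℤ) ≤ K by positivity), ← abs_mul,
        abs_of_nonneg (show (0 : ℤ) ≤ K by positivity)]
      have e0 : det q ((l.take 0).prod) = 0 := by simp [det]
      have e1 : det q l.prod = 0 := by simp [hp, det]
      rcases le_total k l.length with hk | hk
      · have d1 := hd k 0
        have d2 := hd (l.length - k) k
        rw [show k + (l.length - k) = l.length by omega, List.take_length, e1] at d2
        rw [zero_add, e0] at d1
        have h3 : ((l.length - k : ℕ) : ℤ) ≤ l.length := by exact_mod_cast Nat.sub_le _ _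
        have h4 : (k : ℤ) ≤ l.length := by exact_mod_cast hk
        rw [abs_le]
        constructor <;> linarith
      · rw [List.take_of_length_le hk, e1]
        simp
        positivity
    have hA := hS.area_le hl hp hqa hqb hq hn0 (by positivity) hY
    rw [← hCF] at hA
    have h1 : 4 * R ^ 2 * (2 * (l.length : ℤ) ^ 2) ≤ 2 * K * n := by
      rw [hK]
      have := mul_le_mul_of_nonneg_left hn (show 0 ≤ 8 * R ^ 2 by positivity)
      linarith
    have h2 : (l.length : ℤ) * (4 * R ^ 2 * l.length) ≤
        l.length * (K * CF + 4 * R ^ 2 * K * T) := by linarith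
    have h3 := le_of_mul_le_mul_left h2 (by linarith)
    have h4 : (l.length : ℤ) ≤ K * CF + 4 * R ^ 2 * K * T := by
      have : (1 : ℤ) * l.length ≤ 4 * R ^ 2 * l.length :=
        mul_le_mul_of_nonneg_right (by nlinarith) (by positivity)
      linarith
    have h5 := bound_of_le_add_sqrt hlen1 h4 hTB
    linarith
  obtain ⟨j, i₀, hi₀, hdrop⟩ := hbig
  obtain ⟨i, hi, h1, h2⟩ := discrete_ivt
    (fun i => det q (l.take j).prod - det q (l.take (j + i)).prod) (B := 2 * (R * R)) (t := T)
    (by simp) (by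
      intro k
      rw [← add_assoc]
      rcases take_step hl (j + k) with h | ⟨s, hs, h⟩
      · rw [h]; nlinarith
      · rw [h, det_mul_right]
        have := (abs_le.1 (abs_det_le hqa hqb (hS.ha s hs) (hS.hb s hs))).1
        linarith) (by positivity) (by positivity) hdrop
  exact ⟨j, i, hi.trans hi₀, h1, h2⟩

end Setup

end

/-! ### Replacing a block by a shorter route -/

lemma central_mul (n : ℤ) (g : H3Z) : (⟨0, 0, n⟩ : H3Z) * g = g * ⟨0, 0, n⟩ := by
  ext <;> simp; ring

section

variable {S : Set H3Z} {R E : ℤ} (hS : Setup S R E)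
include hS

namespace Setup

lemma abs_a_le_wl (g : H3Z) : |g.a| ≤ wordLength S g * R := by
  obtain ⟨l, h1, h2, rfl⟩ := hS.word g
  rw [← h1]; exact hS.abs_a_le h2

lemma abs_b_le_wl (g : H3Z) : |g.b| ≤ wordLength S g * R := by
  obtain ⟨l, h1, h2, rfl⟩ := hS.word g
  rw [← h1]; exact hS.abs_b_le h2

lemma abs_c_le_wl (g : H3Z) : |g.c| ≤ 2 * R ^ 2 * (wordLength S g : ℤ) ^ 2 := by
  obtain ⟨l, h1, h2, rfl⟩ := hS.word g
  rw [← h1]; exact hS.abs_c_le h2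

lemma abs_c_le_of_wl_le {g : H3Z} {x y : ℤ} (h : (wordLength S g : ℤ) ≤ x + y) :
    |g.c| ≤ 2 * R ^ 2 * (2 * x ^ 2 + 2 * y ^ 2) := by
  refine (hS.abs_c_le_wl g).trans (mul_le_mul_of_nonneg_left ?_ (by positivity))
  have := pow_le_pow_left₀ (by positivity) h 2
  nlinarith [sq_nonneg (x - y)]

lemma nonempty : S.Nonempty := by
  by_contra h
  rw [Set.not_nonempty_iff_eq_empty] at h
  obtain ⟨l, -, h2, h3⟩ := hS.word ⟨1, 0, 0⟩
  rcases l with _ | ⟨x, l⟩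
  · have := congrArg H3Z.a h3
    simp at this
  · have := h2 x (by simp)
    simp [h] at this

/-- The generator `q` maximising `det · h`, and the control of `h` by the maximum. -/
lemma exists_max_det (h : H3Z) : ∃ q ∈ S, (∀ s ∈ S, |det s h| ≤ det q h) ∧
    |h.a| ≤ E * det q h ∧ |h.b| ≤ E * det q h := by
  obtain ⟨q, hq, hmax⟩ := Set.exists_max_image S (fun s => det s h) hS.fin hS.nonempty
  have habs : ∀ s ∈ S, |det s h| ≤ det q h := by
    intro s hs
    rw [abs_le]
    have h1 := hmax _ hs
    have h2 := hmax _ (hS.symm s hs)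
    simp only [det, inv_a, inv_b] at h1 h2 ⊢
    constructor <;> linarith
  have hT : 0 ≤ det q h := (abs_nonneg _).trans (habs q hq)
  have hw : ∀ g : H3Z, |det g h| ≤ wordLength S g * det q h := by
    intro g
    obtain ⟨l, h1, h2, rfl⟩ := hS.word g
    rw [← h1]
    exact abs_hom_le h2 (fun g => det g h) (fun _ _ => det_mul_left _ _ _) hT habs
  refine ⟨q, hq, habs, ?_, ?_⟩
  · have h1 := (hw ⟨0, 1, 0⟩).trans (mul_le_mul_of_nonneg_right hS.hy hT)
    simpa [det] using h1
  · have h1 := (hw ⟨1, 0, 0⟩).trans (mul_le_mul_of_nonneg_right hS.hx hT)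
    simpa [det] using h1

/-- If `det q v` drops by about `det q h` along `v`, then the projection of `v * h` is reached by a
power of `q` that is no longer than `v`, up to a bounded error. -/
lemma exists_replacement {h q : H3Z} (hq : q ∈ S) (hT : 0 < det q h)
    (hmax : ∀ s ∈ S, |det s h| ≤ det q h) (ha : |h.a| ≤ E * det q h) (hb : |h.b| ≤ E * det q h)
    {v : List H3Z} (hv : ∀ x ∈ v, x ∈ S) (h1 : det q v.prod ≤ - det q h)
    (h2 : - det q h - 2 * (R * R) ≤ det q v.prod) :
    ∃ u : H3Z, u.a = v.prod.a + h.a ∧ u.b = v.prod.b + h.b ∧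
      (wordLength S u : ℤ) ≤ v.length +
        E * (2 * (R + 2 * R ^ 2 * E) + (R + 2 * R ^ 2 * E) ^ 2) := by
  have hR := hS.R_pos
  have hE := hS.E_pos
  set T := det q h with hTdef
  have hL : |det v.prod h| ≤ v.length * T :=
    abs_hom_le hv (fun g => det g h) (fun _ _ => det_mul_left _ _ _) hT.le hmax
  set Λ := det v.prod h with hΛ
  rw [abs_le] at hL
  have ha1 : Λ / T ≤ v.length := Int.ediv_le_of_le_mul hT hL.2
  have ha2 : -(v.length : ℤ) ≤ Λ / T := (Int.le_ediv_iff_mul_le hT).2 (by linarith)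
  have hm0 : 0 ≤ Λ - Λ / T * T := by linarith [Int.ediv_mul_le Λ hT.ne']
  have hm1 : Λ - Λ / T * T ≤ T := by nlinarith [Int.lt_ediv_add_one_mul_self Λ hT]
  set k := Λ / T
  set ra := v.prod.a + h.a - k * q.a with hra
  set rb := v.prod.b + h.b - k * q.b with hrb
  -- Cramer's rule for the remainder `r` in the basis `q`, `h`.
  have ca : T * ra = (Λ - k * T) * q.a + (det q v.prod + T) * h.a := by
    simp only [hra, hΛ, hTdef, det]; ring
  have cb : T * rb = (Λ - k * T) * q.b + (det q v.prod + T) * h.b := by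
    simp only [hrb, hΛ, hTdef, det]; ring
  have hx : |det q v.prod + T| ≤ 2 * (R * R) := by
    rw [abs_le]; constructor <;> nlinarith
  have hy : |Λ - k * T| ≤ T := by rw [abs_of_nonneg hm0]; exact hm1
  have fin : ∀ r c d : ℤ, T * r = (Λ - k * T) * c + (det q v.prod + T) * d → |c| ≤ R →
      |d| ≤ E * T → |r| ≤ R + 2 * R ^ 2 * E := by
    intro r c d e hc hd
    have h3 : |T * r| ≤ T * R + 2 * (R * R) * (E * T) := by
      rw [e]
      refine (abs_add_le _ _).trans ?_
      rw [abs_mul, abs_mul]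
      exact add_le_add (mul_le_mul hy hc (abs_nonneg _) hT.le)
        (mul_le_mul hx hd (abs_nonneg _) (by positivity))
    rw [abs_mul, abs_of_pos hT] at h3
    refine le_of_mul_le_mul_left (h3.trans (le_of_eq ?_)) hT
    ring
  have hra' := fin ra q.a h.a ca (hS.ha q hq) ha
  have hrb' := fin rb q.b h.b cb (hS.hb q hq) hb
  refine ⟨q ^ k * ⟨ra, rb, 0⟩, ?_, ?_, ?_⟩
  · simp [zpow_a, hra]
  · simp [zpow_b, hrb]
  · refine (hS.mul_le _ _).trans (add_le_add ?_ ?_)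
    · have := hS.zpow_le (g := q) (B := 1) (by exact_mod_cast wl_mem hq) k
      rw [mul_one] at this
      exact this.trans (abs_le.2 ⟨ha2, ha1⟩)
    · refine (hS.coord_le _ _ _).trans (mul_le_mul_of_nonneg_left ?_ (by linarith))
      rw [zero_sub, abs_neg, abs_mul]
      have := mul_le_mul hra' hrb' (abs_nonneg _) (by positivity)
      linarith

/-- Up to a central error of linear size, `z ^ n * h` is represented by a word that is only
boundedly longer than a given quadratically efficient word for `z ^ n`. -/
lemma surgery (κ : ℤ) (hκ : 1 ≤ κ) : ∃ M C N₀ : ℤ, 0 ≤ M ∧ 0 ≤ C ∧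
    ∀ l : List H3Z, (∀ x ∈ l, x ∈ S) →
    ∀ n : ℤ, l.prod = ⟨0, 0, n⟩ → (l.length : ℤ) ^ 2 ≤ κ * n → N₀ ≤ l.length →
    ∀ h : H3Z, (wordLength S h : ℤ) ^ 2 ≤ 2 * R * l.length →
    ∃ W : List H3Z, (∀ x ∈ W, x ∈ S) ∧ (W.length : ℤ) ≤ l.length + M ∧
      ∃ m : ℤ, |m| ≤ C * l.length ∧ W.prod * ⟨0, 0, m⟩ = ⟨0, 0, n⟩ * h := by
  have hR := hS.R_pos
  have hE := hS.E_pos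
  obtain ⟨K, N₀, hblock⟩ := hS.find_block κ (8 * R ^ 5) hκ (by positivity)
  set M := E * (2 * (R + 2 * R ^ 2 * E) + (R + 2 * R ^ 2 * E) ^ 2) with hM
  have hM0 : 0 ≤ M := by positivity
  refine ⟨M, 2 * R ^ 2 * (2 * (K ^ 2 * (8 * R ^ 5)) + 2 * (2 * R)) +
    2 * R ^ 2 * (2 * (K ^ 2 * (8 * R ^ 5)) + 2 * M ^ 2), max N₀ 1, hM0, by positivity, ?_⟩
  intro l hl n hp hn hN h hd
  have hN1 : (1 : ℤ) ≤ l.length := (le_max_right _ _).trans hN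
  replace hN := (le_max_left _ _).trans hN
  set N : ℤ := (l.length : ℤ) with hNdef
  obtain ⟨q, hq, hmax, ha, hb⟩ := hS.exists_max_det h
  rcases ((abs_nonneg _).trans (hmax q hq)).eq_or_lt with h0 | hT
  · -- Here `h` is central.
    rw [← h0, mul_zero] at ha hb
    have ha' : h.a = 0 := abs_nonpos_iff.1 ha
    have hb' : h.b = 0 := abs_nonpos_iff.1 hb
    refine ⟨l, hl, by linarith, h.c, ?_, ?_⟩
    · have h1 := hS.abs_c_le_wl h
      have h2 := mul_le_mul_of_nonneg_left hd (show 0 ≤ 2 * R ^ 2 by positivity)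
      have h3 : 0 ≤ (2 * R ^ 2 * (2 * (K ^ 2 * (8 * R ^ 5))) + 2 * R ^ 2 * (2 * R) +
        2 * R ^ 2 * (2 * (K ^ 2 * (8 * R ^ 5)) + 2 * M ^ 2)) * N := by positivity
      linarith
    · rw [hp]
      ext <;> simp [ha', hb']
  · obtain ⟨T, hTe⟩ : ∃ T : ℕ, (T : ℤ) = det q h :=
      ⟨(det q h).toNat, Int.toNat_of_nonneg hT.le⟩
    have hTd : (T : ℤ) ≤ 2 * R ^ 2 * wordLength S h := by
      rw [hTe]
      have := (le_abs_self _).trans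
        (abs_det_le (hS.ha q hq) (hS.hb q hq) (hS.abs_a_le_wl h) (hS.abs_b_le_wl h))
      linarith
    have hT2 : (T : ℤ) ^ 2 ≤ 8 * R ^ 5 * N := by
      have h1 := pow_le_pow_left₀ (by positivity) hTd 2
      have h2 := mul_le_mul_of_nonneg_left hd (show 0 ≤ 4 * R ^ 4 by positivity)
      linarith
    have hq0 : 1 ≤ q.a ^ 2 + q.b ^ 2 := by
      by_contra hcon
      have h1 : q.a = 0 := by nlinarith [sq_nonneg q.a, sq_nonneg q.b]
      have h2 : q.b = 0 := by nlinarith [sq_nonneg q.a, sq_nonneg q.b]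
      simp [det, h1, h2] at hT
    obtain ⟨j, i, hi, b1, b2⟩ := hblock l hl n hp hn hN q (hS.ha q hq) (hS.hb q hq) hq0 T
      (by omega) hT2
    set U := l.take j
    set V := (l.drop j).take i with hV
    set Z := l.drop (j + i)
    have hUV : l.take (j + i) = U ++ V := List.take_add
    have hUVZ : U ++ V ++ Z = l := by rw [← hUV]; exact List.take_append_drop _ _
    have hUS : ∀ x ∈ U, x ∈ S := fun x hx => hl x (List.mem_of_mem_take hx)
    have hVS : ∀ x ∈ V, x ∈ S := fun x hx => hl x (List.mem_of_mem_drop (List.mem_of_mem_take hx))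
    have hZS : ∀ x ∈ Z, x ∈ S := fun x hx => hl x (List.mem_of_mem_drop hx)
    rw [hUV, List.prod_append, det_mul_right, hTe] at b1 b2
    obtain ⟨u, ua, ub, ulen⟩ := hS.exists_replacement hq hT hmax ha hb hVS
      (by linarith) (by linarith)
    rw [← hM] at ulen
    obtain ⟨l', hw1, hw2, hw3⟩ := hS.word u
    have hlen : (U.length : ℤ) + V.length + Z.length = N := by
      rw [hNdef, ← hUVZ]; push_cast [List.length_append]; ring
    -- Rotate the word so that the block `V` comes last, next to `h`.
    refine ⟨Z ++ U ++ l', ?_, ?_, (V.prod * h).c - u.c, ?_, ?_⟩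
    · intro x hx
      simp only [List.mem_append] at hx
      rcases hx with (hx | hx) | hx
      · exact hZS x hx
      · exact hUS x hx
      · exact hw2 x hx
    · push_cast [List.length_append, hw1]
      linarith
    · have hVi : (V.length : ℤ) ≤ K * T := by
        have : V.length ≤ K * T := (List.length_take_le _ _).trans hi
        exact_mod_cast this
      have hV2 : (V.length : ℤ) ^ 2 ≤ K ^ 2 * (8 * R ^ 5) * N := by
        have h1 := pow_le_pow_left₀ (by positivity) hVi 2
        have h2 := mul_le_mul_of_nonneg_left hT2 (sq_nonneg (K : ℤ))
        linarith
      have c1 := hS.abs_c_le_of_wl_le (g := V.prod * h) (x := V.length) (y := wordLength S h) (by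
        refine (hS.mul_le _ _).trans (add_le_add_left ?_ _)
        exact_mod_cast wl_le_length hVS)
      have c2 := hS.abs_c_le_of_wl_le ulen
      have hMN : M ^ 2 ≤ M ^ 2 * N := le_mul_of_one_le_right (sq_nonneg M) hN1
      have c3 := mul_le_mul_of_nonneg_left
        (show 2 * (V.length : ℤ) ^ 2 + 2 * (wordLength S h : ℤ) ^ 2 ≤
          2 * (K ^ 2 * (8 * R ^ 5) * N) + 2 * (2 * R * N) by linarith)
        (show 0 ≤ 2 * R ^ 2 by positivity)
      have c4 := mul_le_mul_of_nonneg_left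
        (show 2 * (V.length : ℤ) ^ 2 + 2 * M ^ 2 ≤
          2 * (K ^ 2 * (8 * R ^ 5) * N) + 2 * (M ^ 2 * N) by linarith)
        (show 0 ≤ 2 * R ^ 2 by positivity)
      have c5 := abs_sub (V.prod * h).c u.c
      linarith
    · have e1 : u * ⟨0, 0, (V.prod * h).c - u.c⟩ = V.prod * h := by
        ext <;> simp [ua, ub]
      have e2 : Z.prod * U.prod * V.prod = ⟨0, 0, n⟩ := by
        have e3 : U.prod * V.prod * Z.prod = ⟨0, 0, n⟩ := by
          rw [← hp, ← hUVZ, List.prod_append, List.prod_append]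
        have e4 : Z.prod * U.prod * V.prod * Z.prod = (⟨0, 0, n⟩ : H3Z) * Z.prod := by
          rw [central_mul, ← e3]; group
        exact mul_right_cancel e4
      rw [List.prod_append, List.prod_append, hw3, mul_assoc, e1, ← mul_assoc, e2]

/-! ### Absorbing a central error -/

/-- A central factor of linear size costs a bounded number of letters in a word with quadratically
large last coordinate: conjugating a prefix `p` by `(0, j, 0)` changes that coordinate by
`j * p.a`. -/
lemma absorb (κ M C C' : ℤ) (hκ : 1 ≤ κ) (hC : 0 ≤ C) : ∃ M' N₀ : ℤ,
    ∀ N n m : ℤ, N₀ ≤ N → N ^ 2 ≤ κ * n → |m| ≤ C * N → ∀ W : List H3Z, (∀ x ∈ W, x ∈ S) →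
      (W.length : ℤ) ≤ N + M → n ≤ W.prod.c + C' * N →
      (wordLength S (W.prod * ⟨0, 0, m⟩) : ℤ) ≤ W.length + M' := by
  have hR := hS.R_pos
  have hE := hS.E_pos
  set J := 2 * κ * R * C + 1 with hJ
  have hJ0 : 0 < J := by positivity
  refine ⟨2 * (E * J) + E * (J * (R + 1)), max 1 (max M (κ * J * (C' + 2 * R) + 1)), ?_⟩
  intro N n m hN hn hm W hW hWN hc
  have hN1 : 1 ≤ N := (le_max_left _ _).trans hN
  have hN2 : M ≤ N := (le_max_left _ _).trans ((le_max_right _ _).trans hN)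
  have hN3 : κ * J * (C' + 2 * R) + 1 ≤ N := (le_max_right _ _).trans ((le_max_right _ _).trans hN)
  have hXJ : C * N / J * J ≤ C * N := Int.ediv_mul_le _ hJ0.ne'
  have hX0 : 0 ≤ C * N / J := Int.ediv_nonneg (by positivity) hJ0.le
  -- If all prefixes had `|p.a| ≤ C * N / J`, the last coordinate of `W` would be too small.
  have hex : ∃ k : ℕ, C * N / J < |(W.take k).prod.a| := by
    by_contra hcon
    push Not at hcon
    have h1 := (le_abs_self _).trans (hS.abs_c_le_of hW hcon)
    have h2 : (W.length : ℤ) * (R + R * (C * N / J)) ≤ 2 * N * (R + R * (C * N / J)) :=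
      mul_le_mul_of_nonneg_right (by linarith) (by positivity)
    have h3 : n ≤ 2 * N * (R + R * (C * N / J)) + C' * N := by linarith
    have h4 := mul_le_mul_of_nonneg_left h3 (show 0 ≤ κ * J by positivity)
    have h5 := mul_le_mul_of_nonneg_left hXJ (show 0 ≤ 2 * κ * N * R by positivity)
    have h6 := mul_le_mul_of_nonneg_left hn hJ0.le
    have h7 : N * N ≤ κ * J * (C' + 2 * R) * N := by
      have hJN : J * N ^ 2 = 2 * κ * R * C * N ^ 2 + N ^ 2 := by rw [hJ]; ring
      linarith
    have := le_of_mul_le_mul_right h7 (by linarith)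
    linarith
  obtain ⟨k₀, hk₀⟩ := hex
  obtain ⟨σ, hσ, hσk⟩ : ∃ σ : ℤ, |σ| = 1 ∧ |(W.take k₀).prod.a| = σ * (W.take k₀).prod.a := by
    rcases abs_choice (W.take k₀).prod.a with h | h
    · exact ⟨1, by simp, by rw [h, one_mul]⟩
    · exact ⟨-1, by simp, by rw [h]; ring⟩
  obtain ⟨ε, hε, hεm⟩ : ∃ ε : ℤ, |ε| = 1 ∧ m = ε * |m| := by
    rcases abs_choice m with h | h
    · exact ⟨1, by simp, by rw [h, one_mul]⟩
    · exact ⟨-1, by simp, by rw [h]; ring⟩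
  have ht : |m| / J ≤ C * N / J := Int.ediv_le_ediv hJ0 hm
  obtain ⟨k, -, k1, k2⟩ := discrete_ivt (fun k => σ * (W.take k).prod.a) (B := R) (t := |m| / J)
    (by simp) (by
      intro k
      rcases take_step hW k with h | ⟨s, hs, h⟩
      · rw [h]; linarith
      · rw [h, mul_a, mul_add]
        have : σ * s.a ≤ R := by
          refine (le_abs_self _).trans ?_
          rw [abs_mul, hσ, one_mul]
          exact hS.ha s hs
        linarith) (by linarith) (Int.ediv_nonneg (abs_nonneg _) hJ0.le) (K := k₀) (by linarith)
  set p := (W.take k).prod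
  set r := (W.drop k).prod
  have hpr : W.prod = p * r := by
    rw [← List.prod_append, List.take_append_drop]
  set j := ε * σ * J with hj
  have hjabs : |j| = J := by rw [hj, abs_mul, abs_mul, hε, hσ, abs_of_pos hJ0]; ring
  have herr : |m - j * p.a| ≤ J * (R + 1) := by
    have e : m - j * p.a = ε * (|m| - J * (σ * p.a)) := by
      rw [hj]; linear_combination hεm
    rw [e, abs_mul, hε, one_mul, abs_le]
    have d1 : |m| / J * J ≤ |m| := Int.ediv_mul_le _ hJ0.ne'
    have d2 : |m| < (|m| / J + 1) * J := Int.lt_ediv_add_one_mul_self _ hJ0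
    have d3 := mul_le_mul_of_nonneg_left k1 hJ0.le
    have d4 := mul_le_mul_of_nonneg_left k2 hJ0.le
    constructor <;> nlinarith
  have e : W.prod * ⟨0, 0, m⟩ =
      (⟨0, -j, 0⟩ * p) * (⟨0, j, 0⟩ * r) * ⟨0, 0, m - j * p.a⟩ := by
    rw [hpr]
    ext <;> simp <;> ring
  rw [e]
  have f1 := hS.mul_le ((⟨0, -j, 0⟩ * p) * (⟨0, j, 0⟩ * r)) ⟨0, 0, m - j * p.a⟩
  have f2 := hS.mul_le (⟨0, -j, 0⟩ * p) (⟨0, j, 0⟩ * r)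
  have f3 := hS.mul_le ⟨0, -j, 0⟩ p
  have f4 := hS.mul_le ⟨0, j, 0⟩ r
  have g1 := hS.coord_le 0 (-j) 0
  have g2 := hS.coord_le 0 j 0
  have g3 := hS.coord_le 0 0 (m - j * p.a)
  simp only [abs_neg, abs_zero, zero_mul, sub_zero, add_zero, zero_add, hjabs] at g1 g2 g3
  have g4 := mul_le_mul_of_nonneg_left herr (show 0 ≤ E by linarith)
  have p1 : (wordLength S p : ℤ) ≤ (W.take k).length := by
    exact_mod_cast wl_le_length (fun x hx => hW x (List.mem_of_mem_take hx))
  have r1 : (wordLength S r : ℤ) ≤ (W.drop k).length := by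
    exact_mod_cast wl_le_length (fun x hx => hW x (List.mem_of_mem_drop hx))
  have hlen : ((W.take k).length : ℤ) + (W.drop k).length = W.length := by
    rw [← Nat.cast_add, ← List.length_append, List.take_append_drop]
  linarith

/-- The theorem over `ℤ`, with the threshold expressed by the word length of `h` alone. -/
lemma main : ∃ M n₀ : ℤ, ∀ n : ℤ, n₀ ≤ n → ∀ h : H3Z, (wordLength S h : ℤ) ^ 4 ≤ n →
    (wordLength S ((⟨0, 0, n⟩ : H3Z) * h) : ℤ) ≤ wordLength S (⟨0, 0, n⟩ : H3Z) + M := by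
  have hR := hS.R_pos
  have hE := hS.E_pos
  have hκ : 1 ≤ 100 * E ^ 2 := by nlinarith
  obtain ⟨M₁, C, N₁, hM₁, hC, hsurg⟩ := hS.surgery _ hκ
  obtain ⟨M₂, N₂, habs⟩ := hS.absorb _ M₁ C (C + 4 * R ^ 3) hκ hC
  refine ⟨M₁ + M₂, 2 * R ^ 2 * (|N₁| + |N₂|) ^ 2 + 1, ?_⟩
  intro n hn h hd
  have hn1 : 1 ≤ n := by
    have : 0 ≤ 2 * R ^ 2 * (|N₁| + |N₂|) ^ 2 := by positivity
    linarith
  obtain ⟨l, hl1, hl2, hl3⟩ := hS.word ⟨0, 0, n⟩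
  rw [← hl1]
  have hup : (l.length : ℤ) ^ 2 ≤ 100 * E ^ 2 * n := by rw [hl1]; exact hS.sq_wl_z_le hn1
  have hlow : n ≤ 2 * R ^ 2 * (l.length : ℤ) ^ 2 := by
    have := (le_abs_self _).trans (hS.abs_c_le hl2)
    rwa [hl3] at this
  have hN : |N₁| + |N₂| ≤ l.length := by
    by_contra hcon
    push Not at hcon
    have h1 := pow_le_pow_left₀ (by positivity) hcon.le 2
    have h2 := mul_le_mul_of_nonneg_left h1 (show 0 ≤ 2 * R ^ 2 by positivity)
    linarith
  have hN₁ : N₁ ≤ l.length := by linarith [le_abs_self N₁, abs_nonneg N₂]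
  have hN₂ : N₂ ≤ l.length := by linarith [le_abs_self N₂, abs_nonneg N₁]
  have hd2 : (wordLength S h : ℤ) ^ 2 ≤ 2 * R * l.length := by
    refine (sq_le_sq₀ (by positivity) (by positivity)).1 ?_
    nlinarith [mul_nonneg (sq_nonneg R) (sq_nonneg (l.length : ℤ))]
  obtain ⟨W, hW, hWlen, m, hm, hWm⟩ := hsurg l hl2 n hl3 hup hN₁ h hd2
  rw [← hWm]
  have hc : n ≤ W.prod.c + (C + 4 * R ^ 3) * l.length := by
    have e := congrArg H3Z.c hWm
    simp only [mul_c, mul_zero, zero_mul, add_zero] at e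
    have h1 := hS.abs_c_le_wl h
    have h2 := mul_le_mul_of_nonneg_left hd2 (show 0 ≤ 2 * R ^ 2 by positivity)
    have h3 := neg_abs_le h.c
    have h4 := le_abs_self m
    linarith
  have := habs l.length n m hN₂ hup hm W hW hWlen hc
  linarith

end Setup

end

end AlmostDeadEnds

/-- Almost dead ends in `H₃(ℤ)` for arbitrary word metrics: for any finite symmetric
generating set `S`, there are `C, M > 0` and `D₀` such that for all `D ≥ D₀` and all
integers `n ≥ C·D⁴`, `g = zⁿ = (0,0,n)` satisfies `‖g·h‖_S ≤ ‖g‖_S + M` whenever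
`‖h‖_S ≤ D`. -/
theorem almost_dead_ends_in_H3Z (S : Set H3Z) (hfin : S.Finite)
    (hsymm : ∀ s ∈ S, s⁻¹ ∈ S) (hgen : Subgroup.closure S = ⊤) :
    ∃ C M : ℝ, 0 < C ∧ 0 < M ∧ ∃ D₀ : ℝ,
      ∀ D : ℝ, D₀ ≤ D → ∀ n : ℤ, C * D^4 ≤ (n : ℝ) →
        ∀ h : H3Z, (wordLength S h : ℝ) ≤ D →
          (wordLength S ((⟨0, 0, n⟩ : H3Z) * h) : ℝ) ≤
            (wordLength S (⟨0, 0, n⟩ : H3Z) : ℝ) + M := by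
  obtain ⟨R, E, hS⟩ := AlmostDeadEnds.exists_setup hfin hsymm hgen
  obtain ⟨M, n₀, hmain⟩ := hS.main
  refine ⟨1, |(M : ℝ)| + 1, one_pos, by positivity, |(n₀ : ℝ)| + 1, ?_⟩
  intro D hD n hn h hh
  rw [one_mul] at hn
  have hD1 : 1 ≤ D := by linarith [abs_nonneg (n₀ : ℝ)]
  have hn₀ : n₀ ≤ n := by
    have h1 : D ≤ D ^ 4 := le_self_pow₀ hD1 (by norm_num)
    have h2 : (n₀ : ℝ) ≤ n := by linarith [le_abs_self (n₀ : ℝ)]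
    exact_mod_cast h2
  have hd : (wordLength S h : ℤ) ^ 4 ≤ n := by
    have h1 := (pow_le_pow_left₀ (by positivity) hh 4).trans hn
    exact_mod_cast h1
  have h3 : (wordLength S ((⟨0, 0, n⟩ : H3Z) * h) : ℝ) ≤
      (wordLength S (⟨0, 0, n⟩ : H3Z) : ℝ) + M := by
    exact_mod_cast hmain n hn₀ h hd
  linarith [le_abs_self (M : ℝ)]
end
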